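/- arXiv:2409.02025 — 6 statements merged into one kernel-verified Lean document; each statement's English description precedes it below -/
import Mathlib

section
/- For every r ≥ 0, α ≥ 0 and T ∈ ℝ there exists a unique function u : (−∞, T] × Ω^Q → ℝ such that for every q ∈ Ω^Q the map t ↦ u(t, q) is continuously differentiable on (−∞, T], u satisfies 0 = ∂_t u(t, q) − r u(t, q) + H(q, u(t, q−1) − u(t, q), u(t, q+1) − u(t, q)) for all t ≤ T and all q ∈ Ω^Q, and u(T, q) = −α q² for all q ∈ Ω^Q. -/
/-- The optimised Hamiltonian of the ergodic Avellaneda–Stoikov model. -/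
noncomputable def Hopt (qlow qhigh : ℤ) (lp lm kp km phi : ℝ) (q : ℤ) (p1 p2 : ℝ) : ℝ :=
  (if qlow < q then (lp / kp) * Real.exp (kp * p1 - 1) else 0)
    + (if q < qhigh then (lm / km) * Real.exp (km * p2 - 1) else 0)
    - phi * (q : ℝ) ^ 2

/-- `u` is a solution of the discounted finite-horizon HJB system on `(-∞, T]` with
discount factor `r` and terminal penalty `G(q) = -α q²`. -/
def IsFHSol (qlow qhigh : ℤ) (lp lm kp km phi : ℝ) (r alpha T : ℝ)
    (u : ℝ → ℤ → ℝ) : Prop :=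
  ∀ q ∈ Finset.Icc qlow qhigh,
    ContDiffOn ℝ 1 (fun t => u t q) (Set.Iic T) ∧
    (∀ t ≤ T,
      0 = derivWithin (fun s => u s q) (Set.Iic T) t - r * u t q
        + Hopt qlow qhigh lp lm kp km phi q (u t (q - 1) - u t q) (u t (q + 1) - u t q)) ∧
    u T q = -alpha * (q : ℝ) ^ 2

/-!
In reversed time the system is an autonomous ODE `x' = F x` on a finite-dimensional space, with `F`
smooth. Uniqueness is therefore the Cauchy–Lipschitz theorem, and only global existence requires an
argument, because `F` grows exponentially.

At a coordinate where `x` attains its supremum norm with a positive sign, both increments entering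
the Hamiltonian are nonpositive, so the exponentials are at most `1`; where it attains it with a
negative sign, the exponentials push inwards. Hence the outward component of `F` grows at most
linearly in `‖x‖`, and an exponential barrier `g` should confine the solution. To see this, solve
the equation with the state truncated coordinatewise to `[-g s, g s]` at time `s`: that field is
bounded and Lipschitz on compact time intervals, its solution stays below the barrier, and there
the truncation is inactive.
-/

open Set Metric

section IntegralCurves

variable {E : Type*} [NormedAddCommGroup E] [NormedSpace ℝ E] {F : E → E} {γ δ : ℝ → E} {a b : ℝ}
  {s : Set ℝ}

theorem eqOn_Icc_of_isIntegralCurveOn (hF : LocallyLipschitz F)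
    (hγ : IsIntegralCurveOn γ (fun _ => F) (Icc a b))
    (hδ : IsIntegralCurveOn δ (fun _ => F) (Icc a b)) (h : γ a = δ a) :
    EqOn γ δ (Icc a b) := by
  have hcompact : IsCompact (γ '' Icc a b ∪ δ '' Icc a b) :=
    (isCompact_Icc.image_of_continuousOn hγ.continuousOn).union
      (isCompact_Icc.image_of_continuousOn hδ.continuousOn)
  obtain ⟨K, hK⟩ := hF.locallyLipschitzOn.exists_lipschitzOnWith_of_compact hcompact
  exact ODE_solution_unique_of_mem_Icc_right (fun _ _ => hK)
    hγ.continuousOn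
    (fun t ht => (hγ t (Ico_subset_Icc_self ht)).mono_of_mem_nhdsWithin (Icc_mem_nhdsGE_of_mem ht))
    (fun t ht => .inl (mem_image_of_mem γ (Ico_subset_Icc_self ht)))
    hδ.continuousOn
    (fun t ht => (hδ t (Ico_subset_Icc_self ht)).mono_of_mem_nhdsWithin (Icc_mem_nhdsGE_of_mem ht))
    (fun t ht => .inr (mem_image_of_mem δ (Ico_subset_Icc_self ht))) h

theorem exists_isIntegralCurveOn_Ici_of_forall_Icc (hF : LocallyLipschitz F) {x₀ : E}
    (hloc : ∀ b, a ≤ b → ∃ γ : ℝ → E, γ a = x₀ ∧ IsIntegralCurveOn γ (fun _ => F) (Icc a b)) :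
    ∃ γ : ℝ → E, γ a = x₀ ∧ IsIntegralCurveOn γ (fun _ => F) (Ici a) := by
  choose! γ hγa hγ using hloc
  have hagree : ∀ s, a ≤ s → ∀ t, s ≤ t → γ s s = γ t s := fun s hs t hst =>
    eqOn_Icc_of_isIntegralCurveOn hF (hγ s hs)
      ((hγ t (hs.trans hst)).mono (Icc_subset_Icc_right hst))
      ((hγa s hs).trans (hγa t (hs.trans hst)).symm) (right_mem_Icc.2 hs)
  refine ⟨fun t => γ t t, hγa a le_rfl, fun t (ht : a ≤ t) => ?_⟩
  have ht' : t ≤ t + 1 := by linarith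
  have hnhds : Icc a (t + 1) ∈ nhdsWithin t (Ici a) :=
    inter_mem_nhdsWithin _ (Iic_mem_nhds (lt_add_one t))
  have hderiv : HasDerivWithinAt (γ (t + 1)) (F (γ (t + 1) t)) (Ici a) t :=
    (hγ (t + 1) (ht.trans ht') t ⟨ht, ht'⟩).mono_of_mem_nhdsWithin hnhds
  rw [← hagree t ht (t + 1) ht'] at hderiv
  exact hderiv.congr_of_eventuallyEq
    (Filter.eventually_of_mem hnhds fun s hs => hagree s hs.1 (t + 1) hs.2)
    (hagree t ht (t + 1) ht')

theorem contDiffOn_one_of_isIntegralCurveOn (hγ : IsIntegralCurveOn γ (fun _ => F) s)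
    (hF : Continuous F) (hs : UniqueDiffOn ℝ s) : ContDiffOn ℝ 1 γ s :=
  (contDiffOn_one_iff_derivWithin hs).2
    ⟨fun t ht => (hγ t ht).differentiableWithinAt,
      (hF.comp_continuousOn hγ.continuousOn).congr fun t ht => (hγ t ht).derivWithin (hs t ht)⟩

theorem isIntegralCurveOn_comp_const_sub {v : ℝ → E → E} (hγ : IsIntegralCurveOn γ v s) (T : ℝ) :
    IsIntegralCurveOn (fun t => γ (T - t)) (fun t x => -v (T - t) x) ((fun t => T - t) ⁻¹' s) := by
  intro t ht
  have hsub : HasDerivWithinAt (fun t => T - t) (-1) ((fun t => T - t) ⁻¹' s) t :=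
    ((hasDerivAt_id t).const_sub T).hasDerivWithinAt
  simpa only [Function.comp_def, neg_one_smul] using
    (hγ (T - t) ht).scomp t hsub (mapsTo_preimage _ s)

theorem isIntegralCurveOn_Ici_comp_const_sub_iff {T : ℝ} :
    IsIntegralCurveOn (fun s => γ (T - s)) (fun _ => F) (Ici 0) ↔
      IsIntegralCurveOn γ (fun _ => -F) (Iic T) := by
  refine ⟨fun h => ?_, fun h => ?_⟩
  · simpa [Pi.neg_def] using isIntegralCurveOn_comp_const_sub h T
  · simpa using isIntegralCurveOn_comp_const_sub h T

end IntegralCurves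

section Truncation

variable {ι : Type*} {g : ℝ} {x : ι → ℝ} {i : ι}

/-- Coordinatewise truncation to the interval `[-g, g]`, on which a field is automatically bounded.
For `g < 0` it is the constant `-g`. -/
def clamp (g : ℝ) (x : ι → ℝ) : ι → ℝ := fun i => max (-g) (min g (x i))

theorem clamp_apply_of_eq (hg : 0 ≤ g) (h : x i = g) : clamp g x i = g := by
  rw [clamp, h, min_self, max_eq_right (by linarith)]

theorem clamp_apply_of_eq_neg (hg : 0 ≤ g) (h : x i = -g) : clamp g x i = -g := by
  rw [clamp, h, min_eq_right (by linarith), max_self]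

variable [Fintype ι]

theorem norm_clamp_le (g : ℝ) (x : ι → ℝ) : ‖clamp g x‖ ≤ |g| := by
  refine (pi_norm_le_iff_of_nonneg (abs_nonneg g)).2 fun i => ?_
  rw [Real.norm_eq_abs, clamp]
  grind

theorem norm_clamp_of_abs_apply_eq (hg : 0 ≤ g) (h : |x i| = g) : ‖clamp g x‖ = g := by
  refine le_antisymm ((norm_clamp_le g x).trans_eq (abs_of_nonneg hg)) ?_
  have hi : |clamp g x i| = g := by
    rcases (abs_eq hg).1 h with h | h
    · rw [clamp_apply_of_eq hg h, abs_of_nonneg hg]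
    · rw [clamp_apply_of_eq_neg hg h, abs_neg, abs_of_nonneg hg]
  exact hi.symm.trans_le (norm_le_pi_norm (clamp g x) i)

theorem clamp_eq_self (h : ‖x‖ ≤ g) : clamp g x = x := by
  funext i
  obtain ⟨hlower, hupper⟩ := abs_le.1 ((norm_le_pi_norm x i).trans h)
  rw [clamp, min_eq_right hupper, max_eq_right hlower]

theorem lipschitzWith_clamp (g : ℝ) : LipschitzWith 1 (clamp (ι := ι) g) := by
  refine LipschitzWith.of_dist_le_mul fun x y => ?_
  rw [NNReal.coe_one, one_mul]
  refine (dist_pi_le_iff dist_nonneg).2 fun i => le_trans ?_ (dist_le_pi_dist x y i)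
  simpa [clamp] using ((LipschitzWith.id.const_min g).const_max (-g)).dist_le_mul (x i) (y i)

end Truncation

section GlobalExistence

variable {ι : Type*} [Fintype ι] {F : (ι → ℝ) → ι → ℝ} {a b K : ℝ}

theorem exists_isIntegralCurveOn_Icc_comp_clamp (hF : LocallyLipschitz F) {g : ℝ → ℝ}
    (hg : ContinuousOn g (Icc a b)) (hab : a ≤ b) (x₀ : ι → ℝ) :
    ∃ x : ℝ → ι → ℝ, x a = x₀ ∧
      IsIntegralCurveOn x (fun s y => F (clamp (g s) y)) (Icc a b) := by
  obtain ⟨M, hM⟩ := isCompact_Icc.exists_bound_of_continuousOn hg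
  have hmem : ∀ s ∈ Icc a b, ∀ y : ι → ℝ, clamp (g s) y ∈ closedBall (0 : ι → ℝ) M :=
    fun s hs y => mem_closedBall_zero_iff.2 ((norm_clamp_le (g s) y).trans (hM s hs))
  have hcompact := isCompact_closedBall (0 : ι → ℝ) M
  obtain ⟨K, hK⟩ := hF.locallyLipschitzOn.exists_lipschitzOnWith_of_compact hcompact
  obtain ⟨L, hL⟩ := hcompact.exists_bound_of_continuousOn hF.continuous.continuousOn
  have hPL : IsPicardLindelof (fun s y => F (clamp (g s) y)) (⟨a, left_mem_Icc.2 hab⟩ : Icc a b) x₀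
      (L.toNNReal * (b - a).toNNReal) 0 L.toNNReal (K * 1) :=
    { lipschitzOnWith := fun s hs =>
        hK.comp (lipschitzWith_clamp (g s)).lipschitzOnWith fun y _ => hmem s hs y
      continuousOn := fun y _ => hF.continuous.comp_continuousOn <| continuousOn_pi.2 fun i =>
        hg.neg.sup (hg.inf continuousOn_const)
      norm_le := fun s hs y _ => (hL _ (hmem s hs y)).trans (Real.le_coe_toNNReal L)
      mul_max_le := by simp [hab] }
  exact hPL.exists_eq_forall_mem_Icc_hasDerivWithinAt₀

/-- Linear growth of the outward component of the field `F` at the coordinates where the supremum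
norm is attained; inward components may be arbitrarily large. -/
def HasOutwardLinearGrowth (F : (ι → ℝ) → ι → ℝ) (K : ℝ) : Prop :=
  ∀ y i, (y i = ‖y‖ → F y i ≤ K * (1 + ‖y‖)) ∧ (y i = -‖y‖ → -F y i ≤ K * (1 + ‖y‖))

theorem HasOutwardLinearGrowth.apply_clamp_le (hF : HasOutwardLinearGrowth F K) {g : ℝ}
    (hg : 0 ≤ g) {x : ι → ℝ} {i : ι} (hi : x i = g) : F (clamp g x) i ≤ K * (1 + g) := by
  have hnorm : ‖clamp g x‖ = g := norm_clamp_of_abs_apply_eq hg (by rw [hi, abs_of_nonneg hg])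
  have hbound := (hF (clamp g x) i).1
  rw [hnorm] at hbound
  exact hbound (clamp_apply_of_eq hg hi)

theorem HasOutwardLinearGrowth.neg_apply_clamp_le (hF : HasOutwardLinearGrowth F K) {g : ℝ}
    (hg : 0 ≤ g) {x : ι → ℝ} {i : ι} (hi : x i = -g) : -F (clamp g x) i ≤ K * (1 + g) := by
  have hnorm : ‖clamp g x‖ = g :=
    norm_clamp_of_abs_apply_eq hg (by rw [hi, abs_neg, abs_of_nonneg hg])
  have hbound := (hF (clamp g x) i).2
  rw [hnorm] at hbound
  exact hbound (clamp_apply_of_eq_neg hg hi)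

theorem le_on_Icc_of_deriv_lt_of_eq {f f' B B' : ℝ → ℝ}
    (hf : ∀ s ∈ Icc a b, HasDerivWithinAt f (f' s) (Icc a b) s)
    (hB : ∀ s ∈ Icc a b, HasDerivWithinAt B (B' s) (Icc a b) s) (ha : f a ≤ B a)
    (hlt : ∀ s ∈ Icc a b, f s = B s → f' s < B' s) : ∀ s ∈ Icc a b, f s ≤ B s :=
  image_le_of_deriv_right_lt_deriv_boundary'
    (fun s hs => (hf s hs).continuousWithinAt)
    (fun s hs => (hf s (Ico_subset_Icc_self hs)).mono_of_mem_nhdsWithin (Icc_mem_nhdsGE_of_mem hs))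
    ha
    (fun s hs => (hB s hs).continuousWithinAt)
    (fun s hs => (hB s (Ico_subset_Icc_self hs)).mono_of_mem_nhdsWithin (Icc_mem_nhdsGE_of_mem hs))
    (fun s hs => hlt s (Ico_subset_Icc_self hs))

/-- Truncating at the barrier itself decouples the coordinates: as soon as one of them touches
`± g`, it attains the norm of the truncated state, whatever the others do. -/
theorem norm_le_of_isIntegralCurveOn_comp_clamp (hF : HasOutwardLinearGrowth F K) {g g' : ℝ → ℝ}
    (hg : ∀ s ∈ Icc a b, HasDerivWithinAt g (g' s) (Icc a b) s) (hg0 : ∀ s ∈ Icc a b, 0 ≤ g s)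
    (hg' : ∀ s ∈ Icc a b, K * (1 + g s) < g' s) {x : ℝ → ι → ℝ}
    (hx : IsIntegralCurveOn x (fun s y => F (clamp (g s) y)) (Icc a b)) (hxa : ‖x a‖ ≤ g a) :
    ∀ s ∈ Icc a b, ‖x s‖ ≤ g s := by
  have hxi : ∀ i, ∀ s ∈ Icc a b,
      HasDerivWithinAt (fun s => x s i) (F (clamp (g s) (x s)) i) (Icc a b) s :=
    fun i s hs => hasDerivWithinAt_pi.1 (hx s hs) i
  have hxai : ∀ i, |x a i| ≤ g a := fun i => (norm_le_pi_norm (x a) i).trans hxa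
  have hupper : ∀ i, ∀ s ∈ Icc a b, x s i ≤ g s := fun i =>
    le_on_Icc_of_deriv_lt_of_eq (hxi i) hg ((le_abs_self _).trans (hxai i)) fun s hs heq =>
      (hF.apply_clamp_le (hg0 s hs) heq).trans_lt (hg' s hs)
  have hlower : ∀ i, ∀ s ∈ Icc a b, -x s i ≤ g s := fun i =>
    le_on_Icc_of_deriv_lt_of_eq (fun s hs => (hxi i s hs).neg) hg
      ((neg_le_abs _).trans (hxai i)) fun s hs heq =>
      (hF.neg_apply_clamp_le (hg0 s hs) (neg_eq_iff_eq_neg.1 heq)).trans_lt (hg' s hs)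
  exact fun s hs => (pi_norm_le_iff_of_nonneg (hg0 s hs)).2 fun i =>
    abs_le'.2 ⟨hupper i s hs, hlower i s hs⟩

theorem exists_isIntegralCurveOn_Ici_of_hasOutwardLinearGrowth (hF : LocallyLipschitz F)
    (hK : 0 ≤ K) (hgrowth : HasOutwardLinearGrowth F K) (a : ℝ) (x₀ : ι → ℝ) :
    ∃ x : ℝ → ι → ℝ, x a = x₀ ∧ IsIntegralCurveOn x (fun _ => F) (Ici a) := by
  refine exists_isIntegralCurveOn_Ici_of_forall_Icc hF fun b hab => ?_
  -- Since `g ≥ 1`, the barrier satisfies `g' = (2 K + 1) g > K (1 + g)`.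
  let g : ℝ → ℝ := fun s => (1 + ‖x₀‖) * Real.exp ((2 * K + 1) * (s - a))
  have hg : ∀ s, HasDerivAt g ((2 * K + 1) * g s) s := fun s => by
    have hlin : HasDerivAt (fun s => (2 * K + 1) * (s - a)) (2 * K + 1) s := by
      simpa using ((hasDerivAt_id s).sub_const a).const_mul (2 * K + 1)
    exact (hlin.exp.const_mul (1 + ‖x₀‖)).congr_deriv (by ring)
  have hg1 : ∀ s ∈ Icc a b, 1 ≤ g s := fun s hs =>
    one_le_mul_of_one_le_of_one_le (by linarith [norm_nonneg x₀])
      (Real.one_le_exp (mul_nonneg (by linarith) (sub_nonneg.2 hs.1)))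
  obtain ⟨x, hxa, hx⟩ := exists_isIntegralCurveOn_Icc_comp_clamp hF
    (fun s _ => (hg s).continuousAt.continuousWithinAt) hab x₀
  have hbound : ∀ s ∈ Icc a b, ‖x s‖ ≤ g s :=
    norm_le_of_isIntegralCurveOn_comp_clamp hgrowth (fun s _ => (hg s).hasDerivWithinAt)
      (fun s hs => zero_le_one.trans (hg1 s hs)) (fun s hs => by nlinarith [hg1 s hs]) hx
      (by simp [hxa, g])
  refine ⟨x, hxa, fun s hs => ?_⟩
  simpa only [clamp_eq_self (hbound s hs)] using hx s hs

end GlobalExistence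

section HJB

variable {qlow qhigh : ℤ} {lp lm kp km phi r alpha T : ℝ}

/-- The vector field of the HJB system in reversed time `T - t`, on the finite-dimensional space of
functions on `{qlow, …, qhigh}`. The zero extension only fills arguments which `Hopt` ignores. -/
noncomputable def hjbField (qlow qhigh : ℤ) (lp lm kp km phi r : ℝ)
    (x : Finset.Icc qlow qhigh → ℝ) (q : Finset.Icc qlow qhigh) : ℝ :=
  Hopt qlow qhigh lp lm kp km phi q
    (Function.extend Subtype.val x 0 (q - 1) - x q)
    (Function.extend Subtype.val x 0 (q + 1) - x q) - r * x q

theorem hopt_congr {q : ℤ} {p₁ p₁' p₂ p₂' : ℝ} (h₁ : qlow < q → p₁ = p₁')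
    (h₂ : q < qhigh → p₂ = p₂') :
    Hopt qlow qhigh lp lm kp km phi q p₁ p₂ = Hopt qlow qhigh lp lm kp km phi q p₁' p₂' := by
  unfold Hopt
  congr 2
  · exact ite_congr rfl (fun h => by rw [h₁ h]) fun _ => rfl
  · exact ite_congr rfl (fun h => by rw [h₂ h]) fun _ => rfl

theorem hjbField_restrict (w : ℤ → ℝ) (q : Finset.Icc qlow qhigh) :
    hjbField qlow qhigh lp lm kp km phi r ((Finset.Icc qlow qhigh).restrict w) q =
      Hopt qlow qhigh lp lm kp km phi q (w (q - 1) - w q) (w (q + 1) - w q) - r * w q := by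
  have hext : ∀ p ∈ Finset.Icc qlow qhigh,
      Function.extend Subtype.val ((Finset.Icc qlow qhigh).restrict w) 0 p = w p := fun p hp =>
    Subtype.val_injective.extend_apply ((Finset.Icc qlow qhigh).restrict w) 0 ⟨p, hp⟩
  have hq := Finset.mem_Icc.1 q.2
  refine congrArg (· - r * w q) (hopt_congr (fun h => ?_) fun h => ?_)
  · rw [hext _ (Finset.mem_Icc.2 ⟨by lia, by lia⟩), Finset.restrict]
  · rw [hext _ (Finset.mem_Icc.2 ⟨by lia, by lia⟩), Finset.restrict]

theorem contDiff_extend_val_zero {ι : Type*} {n : WithTop ℕ∞} (s : Finset ι) (i : ι) :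
    ContDiff ℝ n fun x : s → ℝ => Function.extend Subtype.val x 0 i :=
  (LinearMap.proj i ∘ₗ
    Function.ExtendByZero.linearMap ℝ (Subtype.val : s → ι)).toContinuousLinearMap.contDiff

theorem contDiff_hjbField {n : WithTop ℕ∞} :
    ContDiff ℝ n (hjbField qlow qhigh lp lm kp km phi r) := by
  refine contDiff_pi.2 fun q => ?_
  have hpred := contDiff_extend_val_zero (n := n) (Finset.Icc qlow qhigh) (q - 1)
  have hsucc := contDiff_extend_val_zero (n := n) (Finset.Icc qlow qhigh) (q + 1)
  unfold hjbField Hopt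
  split_ifs <;> fun_prop

theorem extend_val_zero_le_norm {ι : Type*} {s : Finset ι} (x : s → ℝ) (i : ι) :
    Function.extend Subtype.val x 0 i ≤ ‖x‖ := by
  by_cases hi : i ∈ s
  · exact (Subtype.val_injective.extend_apply x 0 ⟨i, hi⟩).trans_le
      ((le_abs_self _).trans (norm_le_pi_norm x ⟨i, hi⟩))
  · rw [Function.extend_apply' _ _ _ (by simpa using hi)]
    exact norm_nonneg x

theorem hopt_le_of_nonpos (hlp : 0 ≤ lp) (hlm : 0 ≤ lm) (hkp : 0 < kp) (hkm : 0 < km) (q : ℤ)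
    {p₁ p₂ : ℝ} (hp₁ : p₁ ≤ 0) (hp₂ : p₂ ≤ 0) :
    Hopt qlow qhigh lp lm kp km phi q p₁ p₂ ≤ lp / kp + lm / km - phi * (q : ℝ) ^ 2 := by
  have hexp : ∀ {l k p : ℝ}, 0 ≤ l → 0 < k → p ≤ 0 → l / k * Real.exp (k * p - 1) ≤ l / k :=
    fun hl hk hp => mul_le_of_le_one_right (by positivity)
      (Real.exp_le_one_iff.2 (by nlinarith))
  unfold Hopt
  gcongr <;> split_ifs
  exacts [hexp hlp hkp hp₁, by positivity, hexp hlm hkm hp₂, by positivity]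

theorem neg_mul_sq_le_hopt (hlp : 0 ≤ lp) (hlm : 0 ≤ lm) (hkp : 0 < kp) (hkm : 0 < km) (q : ℤ)
    (p₁ p₂ : ℝ) : -(phi * (q : ℝ) ^ 2) ≤ Hopt qlow qhigh lp lm kp km phi q p₁ p₂ := by
  rw [← zero_sub]
  unfold Hopt
  gcongr
  positivity

theorem hasOutwardLinearGrowth_hjbField (hlp : 0 ≤ lp) (hlm : 0 ≤ lm) (hkp : 0 < kp)
    (hkm : 0 < km) :
    HasOutwardLinearGrowth (hjbField qlow qhigh lp lm kp km phi r)
      (lp / kp + lm / km + ‖fun q : Finset.Icc qlow qhigh => phi * ((q : ℤ) : ℝ) ^ 2‖ + |r|) := by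
  intro y q
  set P := ‖fun q : Finset.Icc qlow qhigh => phi * ((q : ℤ) : ℝ) ^ 2‖
  have hP : |phi * ((q : ℤ) : ℝ) ^ 2| ≤ P :=
    norm_le_pi_norm (fun q : Finset.Icc qlow qhigh => phi * ((q : ℤ) : ℝ) ^ 2) q
  obtain ⟨hPlower, hPupper⟩ := abs_le.1 hP
  have hr : |r * y q| ≤ |r| * ‖y‖ := by
    rw [abs_mul]
    exact mul_le_mul_of_nonneg_left (norm_le_pi_norm y q) (abs_nonneg r)
  obtain ⟨hrlower, hrupper⟩ := abs_le.1 hr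
  have hrates : 0 ≤ lp / kp + lm / km := by positivity
  have hgap : lp / kp + lm / km + P + |r| * ‖y‖ ≤ (lp / kp + lm / km + P + |r|) * (1 + ‖y‖) := by
    have : 0 ≤ (lp / kp + lm / km + P) * ‖y‖ := by positivity
    linarith [abs_nonneg r]
  refine ⟨fun hq => ?_, fun _ => ?_⟩
  · have hincr : ∀ p, Function.extend Subtype.val y 0 p - y q ≤ 0 := fun p =>
      sub_nonpos.2 (hq ▸ extend_val_zero_le_norm y p)
    have hH := hopt_le_of_nonpos (qlow := qlow) (qhigh := qhigh) (phi := phi) hlp hlm hkp hkm q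
      (hincr (q - 1)) (hincr (q + 1))
    rw [hjbField]
    linarith
  · have hH := neg_mul_sq_le_hopt (qlow := qlow) (qhigh := qhigh) (phi := phi) hlp hlm hkp hkm q
      (Function.extend Subtype.val y 0 (q - 1) - y q)
      (Function.extend Subtype.val y 0 (q + 1) - y q)
    rw [hjbField]
    linarith

theorem isFHSol_iff_isIntegralCurveOn {u : ℝ → ℤ → ℝ} :
    IsFHSol qlow qhigh lp lm kp km phi r alpha T u ↔
      IsIntegralCurveOn (fun s => (Finset.Icc qlow qhigh).restrict (u (T - s)))
        (fun _ => hjbField qlow qhigh lp lm kp km phi r) (Ici 0) ∧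
      ∀ q ∈ Finset.Icc qlow qhigh, u T q = -alpha * (q : ℝ) ^ 2 := by
  rw [isIntegralCurveOn_Ici_comp_const_sub_iff
    (γ := fun t => (Finset.Icc qlow qhigh).restrict (u t))]
  refine ⟨fun hu => ⟨fun t ht => hasDerivWithinAt_pi.2 fun q => ?_, fun q hq => (hu q hq).2.2⟩,
    fun ⟨hu, huT⟩ q hq => ⟨?_, fun t ht => ?_, huT q hq⟩⟩
  · obtain ⟨hC1, hode, -⟩ := hu q q.2
    refine ((hC1.differentiableOn one_ne_zero) t ht).hasDerivWithinAt.congr_deriv ?_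
    simp only [Pi.neg_apply, hjbField_restrict]
    linarith [hode t ht]
  · have hC1 := contDiffOn_one_of_isIntegralCurveOn hu (contDiff_hjbField (n := 0)).continuous.neg
      (uniqueDiffOn_Iic T)
    exact contDiffOn_pi.1 hC1 ⟨q, hq⟩
  · have hderiv : derivWithin (fun s => u s q) (Iic T) t = -hjbField qlow qhigh lp lm kp km phi r
        ((Finset.Icc qlow qhigh).restrict (u t)) ⟨q, hq⟩ :=
      (hasDerivWithinAt_pi.1 (hu t ht) ⟨q, hq⟩).derivWithin (uniqueDiffOn_Iic T t ht)
    rw [hderiv, hjbField_restrict]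
    ring

end HJB

theorem stmt1_general (qlow qhigh : ℤ) (lp lm kp km phi : ℝ) (hlp : 0 ≤ lp) (hlm : 0 ≤ lm)
    (hkp : 0 < kp) (hkm : 0 < km) (r alpha T : ℝ) :
    ∃ u : ℝ → ℤ → ℝ,
      IsFHSol qlow qhigh lp lm kp km phi r alpha T u ∧
      ∀ v : ℝ → ℤ → ℝ, IsFHSol qlow qhigh lp lm kp km phi r alpha T v →
        ∀ t ≤ T, ∀ q ∈ Finset.Icc qlow qhigh, v t q = u t q := by
  have hF : LocallyLipschitz (hjbField qlow qhigh lp lm kp km phi r) :=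
    contDiff_hjbField.locallyLipschitz
  obtain ⟨x, hx0, hx⟩ := exists_isIntegralCurveOn_Ici_of_hasOutwardLinearGrowth hF (by positivity)
    (hasOutwardLinearGrowth_hjbField hlp hlm hkp hkm) 0
    ((Finset.Icc qlow qhigh).restrict fun q => -alpha * (q : ℝ) ^ 2)
  let u : ℝ → ℤ → ℝ := fun t => Function.extend Subtype.val (x (T - t)) 0
  have hu : ∀ t, (Finset.Icc qlow qhigh).restrict (u t) = x (T - t) := fun t =>
    Function.extend_comp Subtype.val_injective (x (T - t)) 0
  have husol : IsFHSol qlow qhigh lp lm kp km phi r alpha T u := by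
    refine isFHSol_iff_isIntegralCurveOn.2
      ⟨by simpa only [hu, sub_sub_cancel] using hx, fun q hq => ?_⟩
    simpa [hx0] using congrFun (hu T) ⟨q, hq⟩
  refine ⟨u, husol, fun v hv t ht q hq => ?_⟩
  obtain ⟨hucurve, huT⟩ := isFHSol_iff_isIntegralCurveOn.1 husol
  obtain ⟨hvcurve, hvT⟩ := isFHSol_iff_isIntegralCurveOn.1 hv
  have heq := eqOn_Icc_of_isIntegralCurveOn hF (hvcurve.mono Icc_subset_Ici_self)
    (hucurve.mono Icc_subset_Ici_self)
    (funext fun q => by simp [hvT q q.2, huT q q.2])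
    (right_mem_Icc.2 (sub_nonneg.2 ht))
  simpa using congrFun heq ⟨q, hq⟩

theorem stmt1 (qlow qhigh : ℤ) (hlow : qlow < 0) (hhigh : 0 < qhigh)
    (lp lm kp km phi : ℝ) (hlp : 0 < lp) (hlm : 0 < lm) (hkp : 0 < kp) (hkm : 0 < km)
    (hphi : 0 ≤ phi) (r alpha T : ℝ) (hr : 0 ≤ r) (halpha : 0 ≤ alpha) :
    ∃ u : ℝ → ℤ → ℝ,
      IsFHSol qlow qhigh lp lm kp km phi r alpha T u ∧
      ∀ v : ℝ → ℤ → ℝ, IsFHSol qlow qhigh lp lm kp km phi r alpha T v →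
        ∀ t ≤ T, ∀ q ∈ Finset.Icc qlow qhigh, v t q = u t q :=
  stmt1_general qlow qhigh lp lm kp km phi hlp.le hlm.le hkp hkm r alpha T
end

section
/- Let r > 0 and α ≥ 0. The stationary discounted HJB system 0 = −r u(q) + H(q, u(q−1) − u(q), u(q+1) − u(q)), q ∈ Ω^Q, admits a unique solution u_r : Ω^Q → ℝ. Moreover, if u(·, ·; T) denotes the unique solution on (−∞, T] of the finite-horizon HJB system 0 = ∂_t u − r u + H(q, u(t, q−1) − u(t, q), u(t, q+1) − u(t, q)) with terminal condition u(T, q; T) = −α q², then for every fixed t ∈ ℝ and every q ∈ Ω^Q the limit lim_{T → +∞} u(t, q; T) exists, is independent of t, and equals u_r(q). -/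
open Filter

/-- `w` solves the stationary discounted HJB system with discount factor `r`. -/
def IsStatSol (qlow qhigh : ℤ) (lp lm kp km phi : ℝ) (r : ℝ) (w : ℤ → ℝ) : Prop :=
  ∀ q ∈ Finset.Icc qlow qhigh,
    0 = -r * w q + Hopt qlow qhigh lp lm kp km phi q (w (q - 1) - w q) (w (q + 1) - w q)

/-!
The operator `F w = H(·, w(· - 1) - w, w(· + 1) - w)` is nondecreasing in the increments of `w`, so
`F w ≤ F v` at every point where `w - v` is maximal. Continuous operators with this property behave
as follows.

* At a maximum of `v - w`, a subsolution `v` and a supersolution `w` satisfy `r v ≤ r w`, whence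
  `v ≤ w` everywhere and stationary solutions are unique.
* Constants give a subsolution and a supersolution. Among the subsolutions lying between them, one
  with maximal sum of values is a solution: where its inequality is strict it could be raised.
* For two finite-horizon solutions `u` and `v`, the time derivative of `e^{r (T - t)} (u - v)` is
  `e^{r (T - t)} (F v - F u)`, nonnegative at spatial maxima, so the difference is dominated by its
  terminal values. A stationary solution is a particular finite-horizon solution, hence
  `u(t, ·; T)` approaches it at rate `e^{-r (T - t)}`.
-/

open Set Topology

section MaximumPrinciple

variable {ι : Type*} {s : Finset ι}

lemma exists_forall_le_of_isCompact {X α : Type*} [TopologicalSpace X] [LinearOrder α]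
    [TopologicalSpace α] [ClosedIciTopology α] {K : Set X} (hK : IsCompact K) (hK₀ : K.Nonempty)
    (hs : s.Nonempty) {d : ι → X → α} (hd : ∀ q ∈ s, ContinuousOn (d q) K) :
    ∃ p ∈ s, ∃ x ∈ K, ∀ q ∈ s, ∀ y ∈ K, d q y ≤ d p x := by
  have : Nonempty X := hK₀.nonempty
  choose! x hxK hx using fun q hq => hK.exists_isMaxOn hK₀ (hd q hq)
  obtain ⟨p, hp, hpmax⟩ := s.exists_max_image (fun q => d q (x q)) hs
  exact ⟨p, hp, x p, hxK p hp, fun q hq y hy => (hx q hq hy).trans (hpmax q hq)⟩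

lemma hasDerivWithinAt_nonpos_of_isMaxOn_Icc {f : ℝ → ℝ} {f' a b : ℝ} (hab : a < b)
    (hf : HasDerivWithinAt f f' (Icc a b) a) (hmax : IsMaxOn f (Icc a b) a) : f' ≤ 0 := by
  have hcone : b - a ∈ posTangentConeAt (Icc a b) a :=
    sub_mem_posTangentConeAt_of_segment_subset (segment_eq_Icc hab.le).subset
  have hslope : (b - a) * f' ≤ 0 := by
    simpa using hmax.localize.hasFDerivWithinAt_nonpos hf.hasFDerivWithinAt hcone
  exact nonpos_of_mul_nonpos_right hslope (sub_pos.2 hab)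

variable {d d' : ι → ℝ → ℝ} {a b M : ℝ}

lemma le_of_deriv_pos_at_spatial_max
    (hd : ∀ q ∈ s, ∀ t ∈ Icc a b, HasDerivWithinAt (d q) (d' q t) (Icc a b) t)
    (hmax : ∀ q ∈ s, ∀ t ∈ Ico a b, (∀ p ∈ s, d p t ≤ d q t) → 0 < d' q t)
    (hM : ∀ q ∈ s, d q b ≤ M) {q : ι} (hq : q ∈ s) {t : ℝ} (ht : t ∈ Icc a b) :
    d q t ≤ M := by
  obtain ⟨p, hp, x, hx, hglobal⟩ := exists_forall_le_of_isCompact isCompact_Icc ⟨t, ht⟩ ⟨q, hq⟩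
    fun q hq t ht => (hd q hq t ht).continuousWithinAt
  suffices x = b from (hglobal q hq t ht).trans (this ▸ hM p hp)
  by_contra hxb
  have hlt : x < b := hx.2.lt_of_ne hxb
  have hsub : Icc x b ⊆ Icc a b := Icc_subset_Icc_left hx.1
  have hpos : 0 < d' p x := hmax p hp x ⟨hx.1, hlt⟩ fun q hq => hglobal q hq x hx
  exact hpos.not_ge <| hasDerivWithinAt_nonpos_of_isMaxOn_Icc hlt ((hd p hp x hx).mono hsub)
    fun y hy => hglobal p hp y (hsub hy)

lemma le_of_deriv_nonneg_at_spatial_max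
    (hd : ∀ q ∈ s, ∀ t ∈ Icc a b, HasDerivWithinAt (d q) (d' q t) (Icc a b) t)
    (hmax : ∀ q ∈ s, ∀ t ∈ Ico a b, (∀ p ∈ s, d p t ≤ d q t) → 0 ≤ d' q t)
    (hM : ∀ q ∈ s, d q b ≤ M) {q : ι} (hq : q ∈ s) {t : ℝ} (ht : t ∈ Icc a b) :
    d q t ≤ M := by
  have hperturbed (ε : ℝ) (hε : 0 < ε) : d q t + ε * (t - b) ≤ M := by
    refine le_of_deriv_pos_at_spatial_max (d := fun q t => d q t + ε * (t - b))
      (d' := fun q t => d' q t + ε * 1) (fun q hq t ht => ?_) (fun q hq t ht h => ?_)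
      (fun q hq => ?_) hq ht
    · exact (hd q hq t ht).add (((hasDerivWithinAt_id t _).sub_const b).const_mul ε)
    · linarith [hmax q hq t ht fun p hp => le_of_add_le_add_right (h p hp)]
    · simpa using hM q hq
  have hlim : Tendsto (fun ε : ℝ => d q t + ε * (t - b)) (𝓝[>] 0) (𝓝 (d q t)) :=
    tendsto_nhdsWithin_of_tendsto_nhds (Continuous.tendsto' (by fun_prop) _ _ (by simp))
  exact le_of_tendsto hlim (eventually_mem_nhdsWithin.mono hperturbed)

end MaximumPrinciple

section DegenerateElliptic

variable {ι : Type*}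

/-- Degenerate ellipticity on the finite set `s` of a nonlinear operator `F` acting on functions:
the comparison of `F w` and `F v` at a maximum over `s` of `w - v`. It makes `F w q`, for `q ∈ s`,
a function of the increments `w p - w q` with `p ∈ s`, nondecreasing in each of them. -/
def IsDegenerateElliptic (s : Finset ι) (F : (ι → ℝ) → ι → ℝ) : Prop :=
  ∀ ⦃w v : ι → ℝ⦄ ⦃q : ι⦄, q ∈ s → (∀ p ∈ s, w p - v p ≤ w q - v q) → F w q ≤ F v q

/-- Subsolutions on `s` of the stationary equation `r w = F w` with discount rate `r`. -/
def IsSubsolution (s : Finset ι) (F : (ι → ℝ) → ι → ℝ) (r : ℝ) (w : ι → ℝ) : Prop :=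
  ∀ q ∈ s, r * w q ≤ F w q

/-- Supersolutions on `s` of the stationary equation `r w = F w` with discount rate `r`. -/
def IsSupersolution (s : Finset ι) (F : (ι → ℝ) → ι → ℝ) (r : ℝ) (w : ι → ℝ) : Prop :=
  ∀ q ∈ s, F w q ≤ r * w q

/-- Solutions on `s` of the stationary equation `r w = F w` with discount rate `r`. -/
def IsStationarySolution (s : Finset ι) (F : (ι → ℝ) → ι → ℝ) (r : ℝ) (w : ι → ℝ) : Prop :=
  ∀ q ∈ s, r * w q = F w q

/-- Solutions `u t q` on `(-∞, T]`, for `q ∈ s`, of the backward equation `0 = ∂ₜu - r u + F u` with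
terminal condition `u T = g`. The derivative at `T` is one-sided. -/
structure IsFiniteHorizonSolution (s : Finset ι) (F : (ι → ℝ) → ι → ℝ) (r T : ℝ) (g : ι → ℝ)
    (u : ℝ → ι → ℝ) : Prop where
  hasDerivWithinAt : ∀ q ∈ s, ∀ t ≤ T,
    HasDerivWithinAt (fun t => u t q) (r * u t q - F (u t) q) (Iic T) t
  terminal : ∀ q ∈ s, u T q = g q

variable {s : Finset ι} {F : (ι → ℝ) → ι → ℝ} {r : ℝ}

lemma IsStationarySolution.isSubsolution {w : ι → ℝ} (hw : IsStationarySolution s F r w) :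
    IsSubsolution s F r w :=
  fun q hq => (hw q hq).le

lemma IsStationarySolution.isSupersolution {w : ι → ℝ} (hw : IsStationarySolution s F r w) :
    IsSupersolution s F r w :=
  fun q hq => (hw q hq).ge

lemma IsStationarySolution.isFiniteHorizonSolution {w : ι → ℝ}
    (hw : IsStationarySolution s F r w) (T : ℝ) :
    IsFiniteHorizonSolution s F r T w fun _ => w where
  hasDerivWithinAt q hq t _ := by
    rw [hw q hq, sub_self]
    exact hasDerivWithinAt_const t _ _
  terminal _ _ := rfl

namespace IsDegenerateElliptic

lemma apply_const (hF : IsDegenerateElliptic s F) (c : ℝ) {q : ι} (hq : q ∈ s) :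
    F (fun _ => c) q = F 0 q :=
  le_antisymm (hF hq fun _ _ => le_rfl) (hF hq fun _ _ => le_rfl)

theorem subsolution_le_supersolution (hF : IsDegenerateElliptic s F) (hr : 0 < r)
    {v w : ι → ℝ} (hv : IsSubsolution s F r v) (hw : IsSupersolution s F r w) {q : ι} (hq : q ∈ s) :
    v q ≤ w q := by
  obtain ⟨m, hm, hmax⟩ := s.exists_max_image (fun q => v q - w q) ⟨q, hq⟩
  have hvw : r * v m ≤ r * w m := calc
    r * v m ≤ F v m := hv m hm
    _ ≤ F w m := hF hm hmax
    _ ≤ r * w m := hw m hm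
  linarith [hmax q hq, le_of_mul_le_mul_left hvw hr]

lemma exists_const_isSubsolution_isSupersolution (hF : IsDegenerateElliptic s F) (hr : 0 < r) :
    ∃ c : ℝ, 0 ≤ c ∧ IsSubsolution s F r (fun _ => -c) ∧ IsSupersolution s F r (fun _ => c) := by
  set M := ∑ q ∈ s, |F 0 q|
  have hM {q : ι} (hq : q ∈ s) : |F 0 q| ≤ M :=
    Finset.single_le_sum (f := fun q => |F 0 q|) (fun _ _ => abs_nonneg _) hq
  refine ⟨M / r, by positivity, fun q hq => ?_, fun q hq => ?_⟩
  · rw [hF.apply_const _ hq, mul_neg, mul_div_cancel₀ _ hr.ne']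
    exact neg_le_of_abs_le (hM hq)
  · rw [hF.apply_const _ hq, mul_div_cancel₀ _ hr.ne']
    exact le_of_abs_le (hM hq)

lemma exists_pos_isSubsolution_update [DecidableEq ι] (hF : IsDegenerateElliptic s F)
    (hcont : ∀ q ∈ s, Continuous fun w => F w q) {v : ι → ℝ} (hv : IsSubsolution s F r v)
    {q : ι} (hq : q ∈ s) (hlt : r * v q < F v q) :
    ∃ ε > 0, IsSubsolution s F r (Function.update v q (v q + ε)) := by
  have hnear : ∀ᶠ ε : ℝ in 𝓝 0, r * (v q + ε) < F (Function.update v q (v q + ε)) q := by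
    have hcontUpdate : Continuous fun ε : ℝ => F (Function.update v q (v q + ε)) q :=
      (hcont q hq).comp (by fun_prop)
    exact (by fun_prop : Continuous fun ε : ℝ => r * (v q + ε)).continuousAt.eventually_lt
      hcontUpdate.continuousAt (by simpa using hlt)
  obtain ⟨ε, hε, hε₀⟩ := ((hnear.filter_mono nhdsWithin_le_nhds).and
    (self_mem_nhdsWithin : Ioi (0 : ℝ) ∈ 𝓝[>] 0)).exists
  refine ⟨ε, hε₀, fun p hp => ?_⟩
  rcases eq_or_ne p q with rfl | hpq
  · simpa using hε.le
  · have hle : v ≤ Function.update v q (v q + ε) :=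
      le_update_self_iff.2 (le_add_of_nonneg_right (le_of_lt hε₀))
    have hFle : F v p ≤ F (Function.update v q (v q + ε)) p :=
      hF hp fun p' _ => by
        rw [Function.update_of_ne hpq, sub_self]
        exact sub_nonpos.2 (hle p')
    rw [Function.update_of_ne hpq]
    exact (hv p hp).trans hFle

theorem exists_isStationarySolution (hF : IsDegenerateElliptic s F)
    (hcont : ∀ q ∈ s, Continuous fun w => F w q) (hr : 0 < r) :
    ∃ w, IsStationarySolution s F r w := by
  classical
  obtain ⟨c, hc₀, hsub, hsuper⟩ := hF.exists_const_isSubsolution_isSupersolution hr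
  set K : Set (ι → ℝ) := univ.pi (fun _ => Icc (-c) c) ∩ {v | IsSubsolution s F r v}
  have hK : IsCompact K := by
    refine (isCompact_univ_pi fun _ => isCompact_Icc).inter_right ?_
    simp only [IsSubsolution, ofPred_forall]
    exact isClosed_biInter fun q hq =>
      isClosed_le (continuous_const.mul (continuous_apply q)) (hcont q hq)
  have hK₀ : (fun _ => -c) ∈ K := ⟨fun _ _ => ⟨le_rfl, neg_le_self hc₀⟩, hsub⟩
  obtain ⟨w, ⟨hwc, hw⟩, hmax⟩ := hK.exists_isMaxOn ⟨_, hK₀⟩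
    (by fun_prop : Continuous fun v : ι → ℝ => ∑ q ∈ s, v q).continuousOn
  refine ⟨w, fun q hq => (hw q hq).eq_of_not_lt fun hlt => ?_⟩
  obtain ⟨ε, hε, hraised⟩ := hF.exists_pos_isSubsolution_update hcont hw hq hlt
  have hwraised : w ≤ Function.update w q (w q + ε) :=
    le_update_self_iff.2 (le_add_of_nonneg_right hε.le)
  have hraisedK : Function.update w q (w q + ε) ∈ K := by
    refine ⟨fun p hp => ⟨(hwc p hp).1.trans (hwraised p), ?_⟩, hraised⟩
    by_cases hps : p ∈ s
    · exact hF.subsolution_le_supersolution hr hraised hsuper hps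
    · rw [Function.update_of_ne (ne_of_mem_of_not_mem hq hps).symm]
      exact (hwc p hp).2
  refine (hmax hraisedK).not_gt (Finset.sum_lt_sum (fun p _ => hwraised p) ⟨q, hq, ?_⟩)
  simpa using hε

theorem finiteHorizonSolution_sub_le (hF : IsDegenerateElliptic s F)
    {T : ℝ} {g h : ι → ℝ} {u v : ℝ → ι → ℝ}
    (hu : IsFiniteHorizonSolution s F r T g u) (hv : IsFiniteHorizonSolution s F r T h v) {M : ℝ}
    (hM : ∀ q ∈ s, g q - h q ≤ M) {t : ℝ} (ht : t ≤ T) {q : ι} (hq : q ∈ s) :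
    u t q - v t q ≤ Real.exp (-(r * (T - t))) * M := by
  have hderiv (q : ι) (hq : q ∈ s) (τ : ℝ) (hτ : τ ∈ Icc t T) :
      HasDerivWithinAt (fun τ => Real.exp (r * (T - τ)) * (u τ q - v τ q))
        (Real.exp (r * (T - τ)) * (F (v τ) q - F (u τ) q)) (Icc t T) τ := by
    have hexp : HasDerivWithinAt (fun τ => Real.exp (r * (T - τ)))
        (Real.exp (r * (T - τ)) * (r * (-1))) (Icc t T) τ :=
      (((hasDerivWithinAt_id τ _).const_sub T).const_mul r).exp
    have hsub := ((hu.hasDerivWithinAt q hq τ hτ.2).sub (hv.hasDerivWithinAt q hq τ hτ.2)).mono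
      (Icc_subset_Iic_self (a := t))
    exact (hexp.mul hsub).congr_deriv (by simp only [Pi.sub_apply]; ring)
  have hdiscounted : Real.exp (r * (T - t)) * (u t q - v t q) ≤ M := by
    refine le_of_deriv_nonneg_at_spatial_max hderiv (fun q hq τ _ hmax => ?_) (fun q hq => ?_) hq
      (left_mem_Icc.2 ht)
    · exact mul_nonneg (Real.exp_pos _).le <| sub_nonneg.2 <|
        hF hq fun p hp => le_of_mul_le_mul_left (hmax p hp) (Real.exp_pos _)
    · simpa [hu.terminal q hq, hv.terminal q hq] using hM q hq
  rwa [Real.exp_neg, inv_mul_eq_div, le_div_iff₀' (Real.exp_pos _)]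

theorem abs_finiteHorizonSolution_sub_le (hF : IsDegenerateElliptic s F)
    {T : ℝ} {g h : ι → ℝ} {u v : ℝ → ι → ℝ}
    (hu : IsFiniteHorizonSolution s F r T g u) (hv : IsFiniteHorizonSolution s F r T h v) {M : ℝ}
    (hM : ∀ q ∈ s, |g q - h q| ≤ M) {t : ℝ} (ht : t ≤ T) {q : ι} (hq : q ∈ s) :
    |u t q - v t q| ≤ Real.exp (-(r * (T - t))) * M := by
  refine abs_sub_le_iff.2 ⟨?_, ?_⟩
  · exact hF.finiteHorizonSolution_sub_le hu hv (fun q hq => (abs_sub_le_iff.1 (hM q hq)).1) ht hq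
  · exact hF.finiteHorizonSolution_sub_le hv hu (fun q hq => (abs_sub_le_iff.1 (hM q hq)).2) ht hq

theorem tendsto_finiteHorizonSolution (hF : IsDegenerateElliptic s F) (hr : 0 < r)
    {w g : ι → ℝ} (hw : IsStationarySolution s F r w) {U : ℝ → ℝ → ι → ℝ}
    (hU : ∀ T, IsFiniteHorizonSolution s F r T g (U T)) (t : ℝ) {q : ι} (hq : q ∈ s) :
    Tendsto (fun T => U T t q) atTop (𝓝 (w q)) := by
  set M := ∑ q ∈ s, |g q - w q|
  have hM (q : ι) (hq : q ∈ s) : |g q - w q| ≤ M :=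
    Finset.single_le_sum (f := fun q => |g q - w q|) (fun _ _ => abs_nonneg _) hq
  have hdecay : Tendsto (fun T => Real.exp (-(r * (T - t))) * M) atTop (𝓝 0) := by
    have harg : Tendsto (fun T => r * (T - t)) atTop atTop :=
      (tendsto_atTop_add_const_right atTop (-t) tendsto_id).const_mul_atTop hr
    simpa using (Real.tendsto_exp_neg_atTop_nhds_zero.comp harg).mul_const M
  refine tendsto_iff_dist_tendsto_zero.2 (squeeze_zero' (.of_forall fun _ => dist_nonneg) ?_ hdecay)
  filter_upwards [eventually_ge_atTop t] with T hT
  exact hF.abs_finiteHorizonSolution_sub_le (hU T) (hw.isFiniteHorizonSolution T) hM hT hq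

end IsDegenerateElliptic

theorem stmt3_general (hF : IsDegenerateElliptic s F) (hcont : ∀ q ∈ s, Continuous fun w => F w q)
    (hr : 0 < r) (g : ι → ℝ) :
    ∃ ur : ι → ℝ,
      IsStationarySolution s F r ur ∧
      (∀ w : ι → ℝ, IsStationarySolution s F r w → ∀ q ∈ s, w q = ur q) ∧
      (∀ U : ℝ → ℝ → ι → ℝ, (∀ T : ℝ, IsFiniteHorizonSolution s F r T g (U T)) →
        ∀ t : ℝ, ∀ q ∈ s, Tendsto (fun T => U T t q) atTop (𝓝 (ur q))) := by
  obtain ⟨ur, hur⟩ := hF.exists_isStationarySolution hcont hr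
  refine ⟨ur, hur, fun w hw q hq => le_antisymm ?_ ?_, fun U hU t q hq => ?_⟩
  · exact hF.subsolution_le_supersolution hr hw.isSubsolution hur.isSupersolution hq
  · exact hF.subsolution_le_supersolution hr hur.isSubsolution hw.isSupersolution hq
  · exact hF.tendsto_finiteHorizonSolution hr hur hU t hq

end DegenerateElliptic

section AvellanedaStoikov

variable {qlow qhigh : ℤ} {lp lm kp km phi r : ℝ}

/-- The operator `w ↦ (q ↦ H(q, w(q - 1) - w(q), w(q + 1) - w(q)))` of the HJB systems. -/
noncomputable def hjbOperator (qlow qhigh : ℤ) (lp lm kp km phi : ℝ) (w : ℤ → ℝ) (q : ℤ) : ℝ :=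
  Hopt qlow qhigh lp lm kp km phi q (w (q - 1) - w q) (w (q + 1) - w q)

lemma Hopt_le_Hopt (hlp : 0 ≤ lp) (hlm : 0 ≤ lm) (hkp : 0 < kp) (hkm : 0 < km) {q : ℤ}
    {p₁ p₂ p₁' p₂' : ℝ} (h₁ : qlow < q → p₁ ≤ p₁') (h₂ : q < qhigh → p₂ ≤ p₂') :
    Hopt qlow qhigh lp lm kp km phi q p₁ p₂ ≤ Hopt qlow qhigh lp lm kp km phi q p₁' p₂' := by
  unfold Hopt
  gcongr ?_ + ?_ - _
  · split_ifs with hq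
    · have := h₁ hq
      gcongr
    · exact le_rfl
  · split_ifs with hq
    · have := h₂ hq
      gcongr
    · exact le_rfl

lemma isDegenerateElliptic_hjbOperator (hlp : 0 ≤ lp) (hlm : 0 ≤ lm) (hkp : 0 < kp)
    (hkm : 0 < km) :
    IsDegenerateElliptic (Finset.Icc qlow qhigh) (hjbOperator qlow qhigh lp lm kp km phi) := by
  intro w v q hq hmax
  rw [Finset.mem_Icc] at hq
  refine Hopt_le_Hopt hlp hlm hkp hkm (fun hlow => ?_) (fun hhigh => ?_)
  · linarith [hmax (q - 1) (Finset.mem_Icc.2 ⟨by lia, by lia⟩)]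
  · linarith [hmax (q + 1) (Finset.mem_Icc.2 ⟨by lia, by lia⟩)]

lemma continuous_hjbOperator_apply (q : ℤ) :
    Continuous fun w => hjbOperator qlow qhigh lp lm kp km phi w q := by
  unfold hjbOperator Hopt
  split_ifs <;> fun_prop

lemma isStatSol_iff_isStationarySolution {w : ℤ → ℝ} :
    IsStatSol qlow qhigh lp lm kp km phi r w ↔
      IsStationarySolution (Finset.Icc qlow qhigh) (hjbOperator qlow qhigh lp lm kp km phi) r w :=
  forall₂_congr fun q _ => by
    rw [hjbOperator, neg_mul, neg_add_eq_sub, eq_comm, sub_eq_zero, eq_comm]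

lemma IsFHSol.isFiniteHorizonSolution {alpha T : ℝ} {u : ℝ → ℤ → ℝ}
    (hu : IsFHSol qlow qhigh lp lm kp km phi r alpha T u) :
    IsFiniteHorizonSolution (Finset.Icc qlow qhigh) (hjbOperator qlow qhigh lp lm kp km phi) r T
      (fun q => -alpha * (q : ℝ) ^ 2) u where
  hasDerivWithinAt q hq t ht := by
    obtain ⟨hC1, hODE, -⟩ := hu q hq
    refine (hC1.differentiableOn one_ne_zero t ht).hasDerivWithinAt.congr_deriv ?_
    unfold hjbOperator
    linarith [hODE t ht]
  terminal q hq := (hu q hq).2.2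

end AvellanedaStoikov

theorem stmt3 (qlow qhigh : ℤ) (hlow : qlow < 0) (hhigh : 0 < qhigh)
    (lp lm kp km phi : ℝ) (hlp : 0 < lp) (hlm : 0 < lm) (hkp : 0 < kp) (hkm : 0 < km)
    (hphi : 0 ≤ phi) (r alpha : ℝ) (hr : 0 < r) (halpha : 0 ≤ alpha) :
    ∃ ur : ℤ → ℝ,
      -- existence
      IsStatSol qlow qhigh lp lm kp km phi r ur ∧
      -- uniqueness (on Ω^Q)
      (∀ w : ℤ → ℝ, IsStatSol qlow qhigh lp lm kp km phi r w →
        ∀ q ∈ Finset.Icc qlow qhigh, w q = ur q) ∧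
      -- the finite-horizon solutions converge to `ur` as T → ∞, for every fixed t
      (∀ U : ℝ → ℝ → ℤ → ℝ,
        (∀ T : ℝ, IsFHSol qlow qhigh lp lm kp km phi r alpha T (U T)) →
        ∀ t : ℝ, ∀ q ∈ Finset.Icc qlow qhigh,
          Tendsto (fun T => U T t q) atTop (nhds (ur q))) := by
  obtain ⟨ur, hur, huniq, hlim⟩ := stmt3_general
    (isDegenerateElliptic_hjbOperator (phi := phi) hlp.le hlm.le hkp hkm)
    (fun q _ => continuous_hjbOperator_apply q) hr (fun q : ℤ => -alpha * (q : ℝ) ^ 2)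
  exact ⟨ur, isStatSol_iff_isStationarySolution.2 hur,
    fun w hw => huniq w (isStatSol_iff_isStationarySolution.1 hw),
    fun U hU => hlim U fun T => (hU T).isFiniteHorizonSolution⟩
end

section
/- Let γ ∈ ℝ and let v, w : Ω^Q → ℝ be two functions such that both (γ, v) and (γ, w) solve the ergodic HJB equation, i.e. 0 = −γ + H(q, v(q−1) − v(q), v(q+1) − v(q)) and 0 = −γ + H(q, w(q−1) − w(q), w(q+1) − w(q)) for all q ∈ Ω^Q. Then there exists a constant η ∈ ℝ such that v(q) = w(q) + η for all q ∈ Ω^Q. -/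
/-! The equation at `q` determines the increment `v (q + 1) - v q` from the preceding one, because
the Hamiltonian is injective in its last argument for `q < q̄`; at `q = q̲` it does not depend on
`v (q - 1)`, so the first increment is determined outright. Hence two solutions have the same
increments and differ by a constant. -/

section Difference

variable {G E : Type*} [AddCommGroup G] {a b : ℤ} {v w : ℤ → G}

lemma sub_eq_sub_left_endpoint_of_increment_eq
    (hincr : ∀ q ∈ Finset.Ico a b, v (q + 1) - v q = w (q + 1) - w q) :
    ∀ q ∈ Finset.Icc a b, v q - w q = v a - w a := by
  intro q hq
  obtain ⟨haq, hqb⟩ := Finset.mem_Icc.1 hq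
  clear hq
  induction q, haq using Int.leInduction with
  | base => rfl
  | succ n han ih =>
    have hstep := hincr n (Finset.mem_Ico.2 ⟨han, by lia⟩)
    rw [sub_eq_sub_iff_sub_eq_sub.1 hstep, ih (by lia)]

variable {H : ℤ → G → G → E}

lemma increment_eq_of_hamiltonian_eq
    (hleft : ∀ p₁ p₁' p₂, H a p₁ p₂ = H a p₁' p₂)
    (hinj : ∀ q ∈ Finset.Ico a b, ∀ p₁, Function.Injective (H q p₁))
    (heq : ∀ q ∈ Finset.Ico a b,
      H q (v (q - 1) - v q) (v (q + 1) - v q) = H q (w (q - 1) - w q) (w (q + 1) - w q)) :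
    ∀ q ∈ Finset.Ico a b, v (q + 1) - v q = w (q + 1) - w q := by
  intro q hq
  obtain ⟨haq, hqb⟩ := Finset.mem_Ico.1 hq
  clear hq
  induction q, haq using Int.leInduction with
  | base =>
    have ha : a ∈ Finset.Ico a b := Finset.left_mem_Ico.2 hqb
    exact hinj a ha _ ((heq a ha).trans (hleft _ _ _))
  | succ n han ih =>
    have hn : n + 1 ∈ Finset.Ico a b := Finset.mem_Ico.2 ⟨by lia, hqb⟩
    have hbackward : v (n + 1 - 1) - v (n + 1) = w (n + 1 - 1) - w (n + 1) := by
      rw [add_sub_cancel_right, ← neg_sub, ih (by lia), neg_sub]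
    have hH := heq (n + 1) hn
    rw [hbackward] at hH
    exact hinj (n + 1) hn _ hH

theorem stmt6_general
    (hleft : ∀ p₁ p₁' p₂, H a p₁ p₂ = H a p₁' p₂)
    (hinj : ∀ q ∈ Finset.Ico a b, ∀ p₁, Function.Injective (H q p₁))
    (heq : ∀ q ∈ Finset.Ico a b,
      H q (v (q - 1) - v q) (v (q + 1) - v q) = H q (w (q - 1) - w q) (w (q + 1) - w q)) :
    ∃ η : G, ∀ q ∈ Finset.Icc a b, v q = w q + η := by
  have hincr := increment_eq_of_hamiltonian_eq hleft hinj heq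
  exact ⟨v a - w a, fun q hq =>
    sub_eq_iff_eq_add'.1 (sub_eq_sub_left_endpoint_of_increment_eq hincr q hq)⟩

end Difference

section Hamiltonian

variable {qlow qhigh : ℤ} {lp lm kp km phi : ℝ}

lemma Hopt_qlow_eq (p₁ p₁' p₂ : ℝ) :
    Hopt qlow qhigh lp lm kp km phi qlow p₁ p₂ = Hopt qlow qhigh lp lm kp km phi qlow p₁' p₂ := by
  simp only [Hopt, lt_irrefl, if_false]

lemma Hopt_injective_right (hlm : lm ≠ 0) (hkm : km ≠ 0) {q : ℤ} (hq : q < qhigh) (p₁ : ℝ) :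
    Function.Injective (Hopt qlow qhigh lp lm kp km phi q p₁) := by
  intro p₂ p₂' h
  simp only [Hopt, if_pos hq] at h
  have hexp : Real.exp (km * p₂ - 1) = Real.exp (km * p₂' - 1) :=
    mul_left_cancel₀ (div_ne_zero hlm hkm) (add_left_cancel (sub_left_injective h))
  exact mul_left_cancel₀ hkm (sub_left_injective (Real.exp_injective hexp))

end Hamiltonian

theorem stmt6 (qlow qhigh : ℤ) (hlow : qlow < 0) (hhigh : 0 < qhigh)
    (lp lm kp km phi : ℝ) (hlp : 0 < lp) (hlm : 0 < lm) (hkp : 0 < kp) (hkm : 0 < km)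
    (hphi : 0 ≤ phi) (gam : ℝ) (v w : ℤ → ℝ)
    (hv : ∀ q ∈ Finset.Icc qlow qhigh,
      0 = -gam + Hopt qlow qhigh lp lm kp km phi q (v (q - 1) - v q) (v (q + 1) - v q))
    (hw : ∀ q ∈ Finset.Icc qlow qhigh,
      0 = -gam + Hopt qlow qhigh lp lm kp km phi q (w (q - 1) - w q) (w (q + 1) - w q)) :
    ∃ eta : ℝ, ∀ q ∈ Finset.Icc qlow qhigh, v q = w q + eta :=
  stmt6_general Hopt_qlow_eq
    (fun _ hq => Hopt_injective_right hlm.ne' hkm.ne' (Finset.mem_Ico.1 hq).2)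
    fun q hq => add_left_cancel <|
      (hv q (Finset.Ico_subset_Icc_self hq)).symm.trans (hw q (Finset.Ico_subset_Icc_self hq))
end

section
/- Assume κ⁺ = κ⁻ = κ > 0. Every root of the characteristic polynomial of A is real; let λ_max be the largest eigenvalue of A and set C = A − λ_max·I. Then the kernel of C is one-dimensional: there exists a vector ω̂ ∈ ℝ^{Ω^Q} with all entries strictly positive such that C ω̂ = 0, and every vector ω with C ω = 0 is a scalar multiple of ω̂. -/
/-- The matrix `A` from Theorem 2.2, rows and columns indexed by `Ω^Q = {q̲, …, q̄}`. -/
noncomputable def Amat (qlow qhigh : ℤ) (lp lm kappa phi : ℝ) :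
    Matrix {q : ℤ // q ∈ Finset.Icc qlow qhigh} {q : ℤ // q ∈ Finset.Icc qlow qhigh} ℝ :=
  fun q q' =>
    if (q' : ℤ) = (q : ℤ) then -phi * kappa * ((q : ℤ) : ℝ) ^ 2
    else if (q' : ℤ) = (q : ℤ) - 1 then lp * Real.exp (-1)
    else if (q' : ℤ) = (q : ℤ) + 1 then lm * Real.exp (-1)
    else 0

/-!
With weights `p q = (λ⁻ / λ⁺) ^ q` the matrix `diag(p) A` is symmetric, so `A` is similar, through
`diag(√p)`, to a symmetric matrix `S`, and its characteristic polynomial splits over `ℝ`.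

If `l` is the largest eigenvalue, then `M = diag(p) (l - A) = diag(√p) (l - S) diag(√p)` is positive
semidefinite and has the same kernel as `A - l`. The off-diagonal entries of `M` are nonpositive, so
`|x|ᵀ M |x| ≤ xᵀ M x`, and `M x = 0` forces `M |x| = 0`. Reading `M |x| = 0` at an index where `x`
vanishes shows that `x` vanishes at all neighbours of this index, hence everywhere by connectedness.
So a nonzero kernel vector has no zero entry, its absolute value is a positive kernel vector, and
two kernel vectors are proportional because some combination of them vanishes at one index.
-/

open Matrix Relation

/-- Irreducibility of a square matrix: the directed graph with an edge `i → j` for every nonzero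
off-diagonal entry `M i j` is strongly connected. Unlike `Matrix.IsIrreducible`, this does not ask
the entries to be nonnegative. -/
def OffDiagConnected {n R : Type*} [Zero R] (M : Matrix n n R) : Prop :=
  ∀ i j, ReflTransGen (fun i j => i ≠ j ∧ M i j ≠ 0) i j

theorem OffDiagConnected.of_covBy {n R : Type*} [LinearOrder n] [LocallyFiniteOrder n] [Zero R]
    {M : Matrix n n R} (hup : ∀ i j, i ⋖ j → M i j ≠ 0) (hdown : ∀ i j, i ⋖ j → M j i ≠ 0) :
    OffDiagConnected M := by
  intro i j
  rcases le_total i j with hij | hji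
  · exact ReflTransGen.mono (fun a b hab => ⟨hab.ne, hup a b hab⟩) _ _
      (le_iff_reflTransGen_covBy.1 hij)
  · exact ReflTransGen.mono (fun a b hba => ⟨hba.ne', hdown b a hba⟩) _ _
      (reflTransGen_swap.2 (le_iff_reflTransGen_covBy.1 hji))

theorem coe_add_one_eq_of_covBy {lo hi : ℤ} {i j : {q : ℤ // q ∈ Finset.Icc lo hi}}
    (hij : i ⋖ j) : (i : ℤ) + 1 = j := by
  refine Order.covBy_iff_add_one_eq.1
    ((Set.OrdConnected.apply_covBy_apply_iff (OrderEmbedding.subtype _) ?_).2 hij)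
  simpa [Set.Icc] using Set.ordConnected_Icc (a := lo) (b := hi)

section Kernel

variable {n : Type*} [Fintype n] {M : Matrix n n ℝ}

theorem abs_dotProduct_mulVec_abs_le (hoff : Pairwise fun i j => M i j ≤ 0) (x : n → ℝ) :
    |x| ⬝ᵥ M *ᵥ |x| ≤ x ⬝ᵥ M *ᵥ x := by
  simp only [dotProduct, mulVec, Finset.mul_sum, Pi.abs_apply]
  refine Finset.sum_le_sum fun i _ => Finset.sum_le_sum fun j _ => ?_
  rcases eq_or_ne i j with rfl | hij
  · exact le_of_eq (by linear_combination M i i * abs_mul_abs_self (x i))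
  · have hprod : x i * x j ≤ |x i| * |x j| := abs_mul (x i) (x j) ▸ le_abs_self _
    linarith [mul_le_mul_of_nonpos_left hprod (hoff hij)]

variable {x : n → ℝ}

theorem mulVec_abs_eq_zero (hM : M.PosSemidef) (hoff : Pairwise fun i j => M i j ≤ 0)
    (hx : M *ᵥ x = 0) : M *ᵥ |x| = 0 := by
  have hle : |x| ⬝ᵥ M *ᵥ |x| ≤ 0 := by simpa [hx] using abs_dotProduct_mulVec_abs_le hoff x
  exact (hM.dotProduct_mulVec_zero_iff |x|).1 (le_antisymm hle (hM.dotProduct_mulVec_nonneg |x|))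

theorem apply_eq_zero_of_mulVec_abs_eq_zero (hoff : Pairwise fun i j => M i j ≤ 0)
    (hx : M *ᵥ |x| = 0) {i j : n} (hi : x i = 0) (hij : M i j ≠ 0) : x j = 0 := by
  have hterm : ∀ k ∈ Finset.univ, M i k * |x k| ≤ 0 := by
    intro k _
    rcases eq_or_ne i k with rfl | hik
    · simp [hi]
    · exact mul_nonpos_of_nonpos_of_nonneg (hoff hik) (abs_nonneg _)
  have hj := (Finset.sum_eq_zero_iff_of_nonpos hterm).1 (congrFun hx i) j (Finset.mem_univ j)
  simpa [hij] using hj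

theorem eq_zero_of_mulVec_eq_zero_of_apply_eq_zero (hM : M.PosSemidef)
    (hoff : Pairwise fun i j => M i j ≤ 0) (hconn : OffDiagConnected M)
    (hx : M *ᵥ x = 0) {i : n} (hi : x i = 0) : x = 0 := by
  funext j
  induction hconn i j with
  | refl => exact hi
  | tail _ hedge ih =>
    exact apply_eq_zero_of_mulVec_abs_eq_zero hoff (mulVec_abs_eq_zero hM hoff hx) ih hedge.2

theorem exists_pos_span_ker_of_posSemidef [DecidableEq n] (hM : M.PosSemidef)
    (hoff : Pairwise fun i j => M i j ≤ 0) (hconn : OffDiagConnected M) (hdet : M.det = 0) :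
    ∃ v : n → ℝ, (∀ i, 0 < v i) ∧ M *ᵥ v = 0 ∧ ∀ w, M *ᵥ w = 0 → ∃ c : ℝ, w = c • v := by
  obtain ⟨x, hx0, hx⟩ := exists_mulVec_eq_zero_iff.2 hdet
  have hne (i : n) : x i ≠ 0 := fun hi =>
    hx0 (eq_zero_of_mulVec_eq_zero_of_apply_eq_zero hM hoff hconn hx hi)
  have habs : M *ᵥ |x| = 0 := mulVec_abs_eq_zero hM hoff hx
  refine ⟨|x|, fun i => abs_pos.2 (hne i), habs, fun w hw => ?_⟩
  obtain ⟨i, -⟩ := Function.ne_iff.1 hx0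
  refine ⟨w i / |x i|, sub_eq_zero.1 ?_⟩
  refine eq_zero_of_mulVec_eq_zero_of_apply_eq_zero hM hoff hconn (i := i) ?_ ?_
  · rw [mulVec_sub, mulVec_smul, habs, hw, smul_zero, sub_zero]
  · simp [hne i]

end Kernel

open scoped MatrixOrder ComplexOrder in
theorem posSemidef_smul_one_sub {n 𝕜 : Type*} [Fintype n] [DecidableEq n] [RCLike 𝕜]
    {S : Matrix n n 𝕜} (hS : S.IsHermitian) {l : ℝ} (hl : ∀ mu ∈ spectrum ℝ S, mu ≤ l) :
    (l • (1 : Matrix n n 𝕜) - S).PosSemidef := by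
  rw [← Matrix.le_iff, ← Algebra.algebraMap_eq_smul_one]
  exact (le_algebraMap_iff_spectrum_le hS).2 hl

theorem diagonal_mul_mulVec_eq_zero_iff {n R : Type*} [Fintype n] [DecidableEq n] [Ring R]
    [NoZeroDivisors R] {p : n → R} (hp : ∀ i, p i ≠ 0) (B : Matrix n n R) (w : n → R) :
    (diagonal p * B) *ᵥ w = 0 ↔ B *ᵥ w = 0 := by
  simp [funext_iff, ← mulVec_mulVec, mulVec_diagonal, hp]

section DiagonalSymmetrization

variable {n : Type*} [Fintype n] [DecidableEq n] {A : Matrix n n ℝ} {p : n → ℝ}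

/-- The conjugate of `A` by `diag(√p)`. It is symmetric when `diag(p) A` is. -/
noncomputable def sqrtConj (p : n → ℝ) (A : Matrix n n ℝ) : Matrix n n ℝ :=
  diagonal (fun i => √(p i)) * A * diagonal (fun i => (√(p i))⁻¹)

theorem diagonal_sqrt_mul_diagonal_sqrt (hp : ∀ i, 0 ≤ p i) :
    diagonal (fun i => √(p i)) * diagonal (fun i => √(p i)) = diagonal p := by
  simp [fun i => Real.mul_self_sqrt (hp i)]

theorem diagonal_inv_sqrt_mul_diagonal_sqrt (hp : ∀ i, 0 < p i) :
    diagonal (fun i => (√(p i))⁻¹) * diagonal (fun i => √(p i)) = 1 := by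
  simp [fun i => inv_mul_cancel₀ (Real.sqrt_pos.2 (hp i)).ne']

theorem sqrtConj_mul_diagonal_sqrt (hp : ∀ i, 0 < p i) (A : Matrix n n ℝ) :
    sqrtConj p A * diagonal (fun i => √(p i)) = diagonal (fun i => √(p i)) * A := by
  rw [sqrtConj, mul_assoc, diagonal_inv_sqrt_mul_diagonal_sqrt hp, mul_one]

theorem charpoly_sqrtConj (hp : ∀ i, 0 < p i) (A : Matrix n n ℝ) :
    (sqrtConj p A).charpoly = A.charpoly := by
  rw [sqrtConj, charpoly_mul_comm, ← mul_assoc, diagonal_inv_sqrt_mul_diagonal_sqrt hp, one_mul]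

theorem isHermitian_sqrtConj (hp : ∀ i, 0 < p i) (hA : (diagonal p * A).IsSymm) :
    (sqrtConj p A).IsHermitian := by
  ext i j
  have hbalance : p j * A j i = p i * A i j := by simpa using hA.apply i j
  have hi := Real.sqrt_pos.2 (hp i)
  have hj := Real.sqrt_pos.2 (hp j)
  simp only [sqrtConj, conjTranspose_apply, mul_diagonal, diagonal_mul, star_trivial]
  field_simp
  rw [Real.sq_sqrt (hp i).le, Real.sq_sqrt (hp j).le]
  linarith

theorem posSemidef_diagonal_mul_smul_one_sub (hp : ∀ i, 0 < p i)
    (hA : (diagonal p * A).IsSymm) {l : ℝ} (hl : ∀ mu, A.charpoly.IsRoot mu → mu ≤ l) :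
    (diagonal p * (l • (1 : Matrix n n ℝ) - A)).PosSemidef := by
  have hS : (l • (1 : Matrix n n ℝ) - sqrtConj p A).PosSemidef := by
    refine posSemidef_smul_one_sub (isHermitian_sqrtConj hp hA) fun mu hmu => hl mu ?_
    rwa [mem_spectrum_iff_isRoot_charpoly, charpoly_sqrtConj hp] at hmu
  have hcongr : diagonal p * (l • (1 : Matrix n n ℝ) - A) =
      diagonal (fun i => √(p i)) * (l • (1 : Matrix n n ℝ) - sqrtConj p A) *
        (diagonal fun i => √(p i))ᴴ := by
    rw [diagonal_conjTranspose, star_trivial, mul_assoc, sub_mul, sqrtConj_mul_diagonal_sqrt hp,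
      smul_one_mul, ← mul_smul_one l (diagonal _), ← mul_sub, ← mul_assoc,
      diagonal_sqrt_mul_diagonal_sqrt fun i => (hp i).le]
  exact hcongr ▸ hS.mul_mul_conjTranspose_same _

theorem splits_charpoly_of_isSymm_diagonal_mul (hp : ∀ i, 0 < p i) (hA : (diagonal p * A).IsSymm) :
    A.charpoly.Splits :=
  charpoly_sqrtConj hp A ▸ (isHermitian_sqrtConj hp hA).splits_charpoly

theorem exists_pos_span_ker_of_isSymm_diagonal_mul (hp : ∀ i, 0 < p i)
    (hA : (diagonal p * A).IsSymm) (hoff : Pairwise fun i j => 0 ≤ A i j)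
    (hconn : OffDiagConnected A) {l : ℝ} (hl : IsGreatest {mu : ℝ | A.charpoly.IsRoot mu} l) :
    ∃ v : n → ℝ, (∀ i, 0 < v i) ∧ (A - l • (1 : Matrix n n ℝ)) *ᵥ v = 0 ∧
      ∀ w, (A - l • (1 : Matrix n n ℝ)) *ᵥ w = 0 → ∃ c : ℝ, w = c • v := by
  set M := diagonal p * (l • (1 : Matrix n n ℝ) - A) with hMdef
  have hM : M.PosSemidef := posSemidef_diagonal_mul_smul_one_sub hp hA fun mu hmu => hl.2 hmu
  have hentry {i j : n} (hij : i ≠ j) : M i j = -(p i * A i j) := by simp [hMdef, hij]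
  have hMoff : Pairwise fun i j => M i j ≤ 0 := fun i j hij =>
    (hentry hij).trans_le (neg_nonpos.2 (mul_nonneg (hp i).le (hoff hij)))
  have hMconn : OffDiagConnected M := fun i j => ReflTransGen.mono
    (fun a b hab => ⟨hab.1, by simpa [hentry hab.1, (hp a).ne'] using hab.2⟩) _ _ (hconn i j)
  have hdet : M.det = 0 := by
    have hroot : A.charpoly.eval l = 0 := hl.1
    rw [eval_charpoly, scalar_apply, ← smul_one_eq_diagonal] at hroot
    rw [hMdef, det_mul, hroot, mul_zero]
  have hker (w : n → ℝ) : M *ᵥ w = 0 ↔ (A - l • (1 : Matrix n n ℝ)) *ᵥ w = 0 := by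
    rw [hMdef, diagonal_mul_mulVec_eq_zero_iff fun i => (hp i).ne', ← neg_sub, neg_mulVec,
      neg_eq_zero]
  simpa only [hker] using exists_pos_span_ker_of_posSemidef hM hMoff hMconn hdet

theorem stmt8_general (hp : ∀ i, 0 < p i) (hA : (diagonal p * A).IsSymm)
    (hoff : Pairwise fun i j => 0 ≤ A i j) (hconn : OffDiagConnected A) :
    (∀ mu : ℂ, (A.charpoly.map (algebraMap ℝ ℂ)).IsRoot mu → mu.im = 0) ∧
    (∀ lmax : ℝ, IsGreatest {mu : ℝ | A.charpoly.IsRoot mu} lmax →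
      ∃ omega : n → ℝ, (∀ i, 0 < omega i) ∧ (A - lmax • (1 : Matrix n n ℝ)) *ᵥ omega = 0 ∧
        ∀ w, (A - lmax • (1 : Matrix n n ℝ)) *ᵥ w = 0 → ∃ c : ℝ, w = c • omega) := by
  refine ⟨fun mu hmu => ?_,
    fun l hl => exists_pos_span_ker_of_isSymm_diagonal_mul hp hA hoff hconn hl⟩
  obtain ⟨r, rfl⟩ := (splits_charpoly_of_isSymm_diagonal_mul hp hA).mem_range_of_isRoot
    A.charpoly_monic.ne_zero hmu
  exact Complex.ofReal_im r

end DiagonalSymmetrization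

section Amat

variable {qlow qhigh : ℤ} {lp lm : ℝ} (kappa phi : ℝ) {i j : {q : ℤ // q ∈ Finset.Icc qlow qhigh}}

theorem Amat_apply_of_add_one_eq (hij : (i : ℤ) + 1 = j) :
    Amat qlow qhigh lp lm kappa phi i j = lm * Real.exp (-1) := by
  rw [Amat, if_neg (by lia), if_neg (by lia), if_pos hij.symm]

theorem Amat_apply_of_eq_add_one (hij : (i : ℤ) = j + 1) :
    Amat qlow qhigh lp lm kappa phi i j = lp * Real.exp (-1) := by
  rw [Amat, if_neg (by lia), if_pos (by lia)]

theorem Amat_apply_of_not_adjacent (hij : (i : ℤ) ≠ j) (hup : (i : ℤ) + 1 ≠ j)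
    (hdown : (i : ℤ) ≠ j + 1) : Amat qlow qhigh lp lm kappa phi i j = 0 := by
  rw [Amat, if_neg (by lia), if_neg (by lia), if_neg (by lia)]

theorem zpow_mul_Amat_apply_comm (hlp : lp ≠ 0) (hlm : lm ≠ 0)
    (i j : {q : ℤ // q ∈ Finset.Icc qlow qhigh}) :
    (lm / lp) ^ (i : ℤ) * Amat qlow qhigh lp lm kappa phi i j =
      (lm / lp) ^ (j : ℤ) * Amat qlow qhigh lp lm kappa phi j i := by
  wlog hle : (i : ℤ) ≤ j generalizing i j
  · exact (this j i (le_of_not_ge hle)).symm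
  rcases eq_or_ne (i : ℤ) j with heq | hne
  · rw [Subtype.ext heq]
  rcases eq_or_ne ((i : ℤ) + 1) j with hadj | hfar
  · rw [Amat_apply_of_add_one_eq kappa phi hadj, Amat_apply_of_eq_add_one kappa phi hadj.symm,
      ← hadj, zpow_add_one₀ (div_ne_zero hlm hlp)]
    field_simp
  · rw [Amat_apply_of_not_adjacent kappa phi hne hfar (by lia),
      Amat_apply_of_not_adjacent kappa phi hne.symm (by lia) hfar.symm, mul_zero, mul_zero]

theorem isSymm_diagonal_zpow_mul_Amat (hlp : lp ≠ 0) (hlm : lm ≠ 0) :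
    (diagonal (fun q : {q : ℤ // q ∈ Finset.Icc qlow qhigh} => (lm / lp) ^ (q : ℤ)) *
      Amat qlow qhigh lp lm kappa phi).IsSymm :=
  IsSymm.ext fun i j => by
    simpa only [diagonal_mul] using zpow_mul_Amat_apply_comm kappa phi hlp hlm j i

theorem Amat_nonneg_of_ne (hlp : 0 ≤ lp) (hlm : 0 ≤ lm) :
    Pairwise fun i j => 0 ≤ Amat qlow qhigh lp lm kappa phi i j := by
  intro i j hij
  have hji : (j : ℤ) ≠ i := fun h => hij (Subtype.ext h.symm)
  rw [Amat, if_neg hji]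
  positivity

theorem offDiagConnected_Amat (hlp : lp ≠ 0) (hlm : lm ≠ 0) :
    OffDiagConnected (Amat qlow qhigh lp lm kappa phi) := by
  refine .of_covBy (fun i j hij => ?_) (fun i j hij => ?_)
  · rw [Amat_apply_of_add_one_eq kappa phi (coe_add_one_eq_of_covBy hij)]
    positivity
  · rw [Amat_apply_of_eq_add_one kappa phi (coe_add_one_eq_of_covBy hij).symm]
    positivity

end Amat

theorem stmt8 (qlow qhigh : ℤ) (hlow : qlow < 0) (hhigh : 0 < qhigh)
    (lp lm kappa phi : ℝ) (hlp : 0 < lp) (hlm : 0 < lm) (hkappa : 0 < kappa)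
    (hphi : 0 ≤ phi) :
    -- every (complex) root of the characteristic polynomial of A is real
    (∀ mu : ℂ,
      ((Amat qlow qhigh lp lm kappa phi).charpoly.map (algebraMap ℝ ℂ)).IsRoot mu →
      mu.im = 0) ∧
    -- for λ_max the largest eigenvalue, ker(A − λ_max I) is one-dimensional and spanned
    -- by a strictly positive vector
    (∀ lmax : ℝ,
      IsGreatest {mu : ℝ | (Amat qlow qhigh lp lm kappa phi).charpoly.IsRoot mu} lmax →
      ∃ omega : {q : ℤ // q ∈ Finset.Icc qlow qhigh} → ℝ,
        (∀ q, 0 < omega q) ∧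
        (Amat qlow qhigh lp lm kappa phi - lmax • (1 : Matrix _ _ ℝ)).mulVec omega = 0 ∧
        ∀ w : {q : ℤ // q ∈ Finset.Icc qlow qhigh} → ℝ,
          (Amat qlow qhigh lp lm kappa phi - lmax • (1 : Matrix _ _ ℝ)).mulVec w = 0 →
          ∃ c : ℝ, w = c • omega) :=
  stmt8_general (fun q => zpow_pos (div_pos hlm hlp) (q : ℤ))
    (isSymm_diagonal_zpow_mul_Amat kappa phi hlp.ne' hlm.ne')
    (Amat_nonneg_of_ne kappa phi hlp.le hlm.le)
    (offDiagConnected_Amat kappa phi hlp.ne' hlm.ne')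
end

section
/- For every N ≥ 1, all reals δ_1, …, δ_N ∈ [δ̲, δ̄] and all Y_1, …, Y_N ∈ {0, 1}, there exists a unique κ_N ∈ (0, ∞) such that g_N(κ_N) = 0. -/
/-- The (negative) second derivative `J_N(κ)` of the regularised log-likelihood. -/
noncomputable def Jfun (d0 : ℝ) (delta Y : ℕ → ℝ) (N : ℕ) (kappa : ℝ) : ℝ :=
  (∑ n ∈ Finset.Icc 1 N,
      (1 - Y n) * (delta n) ^ 2
        * (Real.exp (-(kappa * delta n)) / (1 - Real.exp (-(kappa * delta n))) ^ 2))
    + d0 ^ 2 * (Real.exp (-(kappa * d0)) / (1 - Real.exp (-(kappa * d0))) ^ 2)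

/-- The first branch of the regularised score (valid for `κ ≤ K̄`). -/
noncomputable def scoreBase (d0 : ℝ) (delta Y : ℕ → ℝ) (N : ℕ) (kappa : ℝ) : ℝ :=
  (∑ n ∈ Finset.Icc 1 N,
      (-(delta n * Y n)
        + (1 - Y n) * delta n
            * (Real.exp (-(kappa * delta n)) / (1 - Real.exp (-(kappa * delta n))))))
    - d0 + d0 * (Real.exp (-(kappa * d0)) / (1 - Real.exp (-(kappa * d0))))

/-- The regularised score `g_N(κ)`, i.e. the derivative of the regularised
log-likelihood `ℓ̃_N`. -/
noncomputable def score (d0 Khigh : ℝ) (delta Y : ℕ → ℝ) (N : ℕ) (kappa : ℝ) : ℝ :=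
  if kappa ≤ Khigh then scoreBase d0 delta Y N kappa
  else scoreBase d0 delta Y N Khigh - (kappa - Khigh) * Jfun d0 delta Y N Khigh

/-!
An observation with `Y = 0` contributes `δ e^{-κδ} / (1 - e^{-κδ}) = ((e^{κδ} - 1) / δ)⁻¹` to the
score. Being the inverse of a continuous increasing function vanishing at `0`, this is positive,
continuous and strictly decreasing in `κ > 0`, and it blows up as `κ → 0⁺`. Up to a constant the
score is a nonnegative combination of such terms in which the prior term `δ₀` has coefficient `1`,
so it inherits these properties. Replacing it beyond `K̄` by an affine function of negative slope
keeps it continuous and strictly decreasing and forces it to `-∞`, hence it is a bijection from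
`(0, ∞)` onto `ℝ`.
-/

open Set Filter Topology

lemma existsUnique_gt_eq_of_strictAntiOn_Ioi {f : ℝ → ℝ} {a : ℝ}
    (hanti : StrictAntiOn f (Ioi a)) (hcont : ContinuousOn f (Ioi a))
    (hleft : Tendsto f (𝓝[>] a) atTop) (hright : Tendsto f atTop atBot) (y : ℝ) :
    ∃! x, a < x ∧ f x = y := by
  have hsurj : SurjOn f (Ioi a) univ :=
    hcont.surjOn_of_tendsto' nonempty_Ioi ((tendsto_comp_coe_Ioi_atBot).2 hleft)
      (tendsto_comp_val_Ioi_atTop.2 hright)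
  obtain ⟨x, hx, hxy⟩ := hsurj (mem_univ y)
  exact ⟨x, ⟨hx, hxy⟩, fun z hz => hanti.injOn hz.1 hx (hz.2.trans hxy.symm)⟩

/-- The function that agrees with `f` up to `K` and continues from `(K, f K)` as the affine
function of slope `-m`; it abstracts the way `score` extends `scoreBase`. -/
noncomputable def affineExtension (f : ℝ → ℝ) (K m x : ℝ) : ℝ :=
  if x ≤ K then f x else f K - (x - K) * m

namespace affineExtension

variable {f : ℝ → ℝ} {a K m x : ℝ}

lemma of_le (hx : x ≤ K) : affineExtension f K m x = f x :=
  if_pos hx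

lemma of_ge (hx : K ≤ x) : affineExtension f K m x = f K - (x - K) * m := by
  rcases hx.eq_or_lt with rfl | hx
  · rw [of_le le_rfl, sub_self, zero_mul, sub_zero]
  · exact if_neg hx.not_ge

lemma eq_min_max : affineExtension f K m x = f (min x K) - (max x K - K) * m := by
  rcases le_total x K with hx | hx
  · rw [of_le hx, min_eq_left hx, max_eq_right hx, sub_self, zero_mul, sub_zero]
  · rw [of_ge hx, min_eq_right hx, max_eq_left hx]

lemma strictAntiOn (hf : StrictAntiOn f (Ioc a K)) (haK : a < K) (hm : 0 < m) :
    StrictAntiOn (affineExtension f K m) (Ioi a) := by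
  have hbelow : StrictAntiOn (affineExtension f K m) (Ioc a K) :=
    hf.congr fun x hx => (of_le hx.2).symm
  have habove : StrictAntiOn (affineExtension f K m) (Ici K) := fun x hx y hy hxy => by
    rw [of_ge hx, of_ge hy]
    gcongr
  rw [← Ioc_union_Ici_eq_Ioi haK]
  exact hbelow.union habove (isGreatest_Ioc haK) isLeast_Ici

lemma continuousOn (hf : ContinuousOn f (Ioc a K)) (haK : a < K) :
    ContinuousOn (affineExtension f K m) (Ioi a) := by
  have hmin : ContinuousOn (fun x => f (min x K)) (Ioi a) :=
    hf.comp (by fun_prop) fun x hx => ⟨lt_min hx haK, min_le_right x K⟩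
  exact (hmin.sub (by fun_prop)).congr fun x _ => eq_min_max

lemma tendsto_nhdsGT (hf : Tendsto f (𝓝[>] a) atTop) (haK : a < K) :
    Tendsto (affineExtension f K m) (𝓝[>] a) atTop := by
  refine hf.congr' ?_
  filter_upwards [Ioc_mem_nhdsGT haK] with x hx using (of_le hx.2).symm

lemma tendsto_atTop_atBot (hm : 0 < m) : Tendsto (affineExtension f K m) atTop atBot := by
  have hlinear : Tendsto (fun x => (x - K) * m) atTop atTop :=
    (tendsto_atTop_add_const_right _ (-K) tendsto_id).atTop_mul_const hm
  have haffine : Tendsto (fun x => f K - (x - K) * m) atTop atBot :=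
    tendsto_atBot_add_const_left _ (f K) (tendsto_neg_atTop_atBot.comp hlinear)
  refine haffine.congr' ?_
  filter_upwards [eventually_ge_atTop K] with x hx using (of_ge hx).symm

end affineExtension

lemma strictMono_exp_mul_sub_one_div {δ : ℝ} (hδ : δ ≠ 0) :
    StrictMono fun κ : ℝ => (Real.exp (κ * δ) - 1) / δ := by
  intro κ κ' hκ
  rcases hδ.lt_or_gt with hneg | hpos
  · have hexp : Real.exp (κ' * δ) < Real.exp (κ * δ) :=
      Real.exp_lt_exp.2 (mul_lt_mul_of_neg_right hκ hneg)
    exact div_lt_div_of_neg_of_lt hneg (sub_lt_sub_right hexp 1)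
  · dsimp only
    gcongr

lemma exp_mul_sub_one_div_pos {δ κ : ℝ} (hδ : δ ≠ 0) (hκ : 0 < κ) :
    0 < (Real.exp (κ * δ) - 1) / δ := by
  simpa using strictMono_exp_mul_sub_one_div hδ hκ

/-- The score `∂/∂κ log (1 - e^{-κδ})` of a single observation `Y = 0` at distance `δ`. -/
noncomputable def missScore (δ κ : ℝ) : ℝ :=
  δ * (Real.exp (-(κ * δ)) / (1 - Real.exp (-(κ * δ))))

namespace missScore

variable {δ κ : ℝ}

lemma eq_inv (δ κ : ℝ) : missScore δ κ = ((Real.exp (κ * δ) - 1) / δ)⁻¹ := by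
  have hfactor : 1 - Real.exp (-(κ * δ)) = Real.exp (-(κ * δ)) * (Real.exp (κ * δ) - 1) := by
    rw [mul_sub, ← Real.exp_add, neg_add_cancel, Real.exp_zero, mul_one]
  rw [missScore, hfactor, div_mul_cancel_left₀ (Real.exp_ne_zero _), inv_div, div_eq_mul_inv]

lemma pos (hδ : δ ≠ 0) (hκ : 0 < κ) : 0 < missScore δ κ := by
  rw [eq_inv]
  exact inv_pos.2 (exp_mul_sub_one_div_pos hδ hκ)

lemma strictAntiOn (hδ : δ ≠ 0) : StrictAntiOn (missScore δ) (Ioi 0) := by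
  intro κ hκ κ' _ hlt
  rw [eq_inv, eq_inv]
  exact inv_strictAnti₀ (exp_mul_sub_one_div_pos hδ hκ) (strictMono_exp_mul_sub_one_div hδ hlt)

lemma continuousOn (hδ : δ ≠ 0) : ContinuousOn (missScore δ) (Ioi 0) := by
  rw [funext (eq_inv δ)]
  exact ContinuousOn.inv₀ (by fun_prop) fun κ hκ => (exp_mul_sub_one_div_pos hδ hκ).ne'

lemma tendsto_nhdsGT_zero (hδ : δ ≠ 0) : Tendsto (missScore δ) (𝓝[>] 0) atTop := by
  have hcont : Continuous fun κ : ℝ => (Real.exp (κ * δ) - 1) / δ := by fun_prop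
  have hzero : Tendsto (fun κ : ℝ => (Real.exp (κ * δ) - 1) / δ) (𝓝[>] 0) (𝓝[>] 0) := by
    refine tendsto_nhdsWithin_iff.2 ⟨?_, ?_⟩
    · simpa using (hcont.tendsto 0).mono_left nhdsWithin_le_nhds
    · filter_upwards [self_mem_nhdsWithin] with κ hκ using exp_mul_sub_one_div_pos hδ hκ
  rw [funext (eq_inv δ)]
  exact hzero.inv_tendsto_nhdsGT_zero

end missScore

section Score

variable {d0 : ℝ} {delta Y : ℕ → ℝ} {N : ℕ}

lemma scoreBase_eq_missScore (d0 : ℝ) (delta Y : ℕ → ℝ) (N : ℕ) (κ : ℝ) :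
    scoreBase d0 delta Y N κ =
      ∑ n ∈ Finset.Icc 1 N, (-(delta n * Y n) + (1 - Y n) * missScore (delta n) κ)
        + (missScore d0 κ - d0) := by
  simp only [scoreBase, missScore, mul_assoc]
  ring

lemma scoreBase_strictAntiOn (hd0 : d0 ≠ 0) (hdelta : ∀ n ∈ Finset.Icc 1 N, delta n ≠ 0)
    (hY : ∀ n ∈ Finset.Icc 1 N, Y n ≤ 1) : StrictAntiOn (scoreBase d0 delta Y N) (Ioi 0) := by
  intro κ hκ κ' hκ' hlt
  rw [scoreBase_eq_missScore, scoreBase_eq_missScore]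
  refine add_lt_add_of_le_of_lt (Finset.sum_le_sum fun n hn => ?_)
    (sub_lt_sub_right (missScore.strictAntiOn hd0 hκ hκ' hlt) d0)
  have hweight : 0 ≤ 1 - Y n := sub_nonneg.2 (hY n hn)
  have hmiss : missScore (delta n) κ' ≤ missScore (delta n) κ :=
    (missScore.strictAntiOn (hdelta n hn) hκ hκ' hlt).le
  gcongr

lemma scoreBase_continuousOn (hd0 : d0 ≠ 0) (hdelta : ∀ n ∈ Finset.Icc 1 N, delta n ≠ 0) :
    ContinuousOn (scoreBase d0 delta Y N) (Ioi 0) := by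
  rw [funext (scoreBase_eq_missScore d0 delta Y N)]
  refine (continuousOn_finsetSum _ fun n hn => ?_).add
    ((missScore.continuousOn hd0).sub continuousOn_const)
  exact continuousOn_const.add (continuousOn_const.mul (missScore.continuousOn (hdelta n hn)))

lemma scoreBase_tendsto_nhdsGT_zero (hd0 : d0 ≠ 0)
    (hdelta : ∀ n ∈ Finset.Icc 1 N, delta n ≠ 0) (hY : ∀ n ∈ Finset.Icc 1 N, Y n ≤ 1) :
    Tendsto (scoreBase d0 delta Y N) (𝓝[>] 0) atTop := by
  rw [funext (scoreBase_eq_missScore d0 delta Y N)]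
  refine tendsto_atTop_add_left_of_le' _ (∑ n ∈ Finset.Icc 1 N, -(delta n * Y n)) ?_
    (tendsto_atTop_add_const_right _ (-d0) (missScore.tendsto_nhdsGT_zero hd0))
  filter_upwards [self_mem_nhdsWithin] with κ hκ
  refine Finset.sum_le_sum fun n hn => le_add_of_nonneg_right ?_
  exact mul_nonneg (sub_nonneg.2 (hY n hn)) (missScore.pos (hdelta n hn) hκ).le

lemma Jfun_pos (hd0 : d0 ≠ 0) (hY : ∀ n ∈ Finset.Icc 1 N, Y n ≤ 1) {κ : ℝ} (hκ : κ ≠ 0) :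
    0 < Jfun d0 delta Y N κ := by
  have hdenom : 1 - Real.exp (-(κ * d0)) ≠ 0 := by
    simp [sub_eq_zero, eq_comm (a := (1 : ℝ)), hκ, hd0]
  refine add_pos_of_nonneg_of_pos (Finset.sum_nonneg fun n hn => ?_) (by positivity)
  have hweight : 0 ≤ 1 - Y n := sub_nonneg.2 (hY n hn)
  positivity

lemma score_eq_affineExtension (d0 Khigh : ℝ) (delta Y : ℕ → ℝ) (N : ℕ) :
    score d0 Khigh delta Y N =
      affineExtension (scoreBase d0 delta Y N) Khigh (Jfun d0 delta Y N Khigh) :=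
  rfl

end Score

theorem stmt15_general {d0 Khigh : ℝ} (hd0 : d0 ≠ 0) (hK : 0 < Khigh) {N : ℕ} {delta Y : ℕ → ℝ}
    (hdelta : ∀ n ∈ Finset.Icc 1 N, delta n ≠ 0) (hY : ∀ n ∈ Finset.Icc 1 N, Y n ≤ 1) :
    ∃! kappa : ℝ, 0 < kappa ∧ score d0 Khigh delta Y N kappa = 0 := by
  have hJ : 0 < Jfun d0 delta Y N Khigh := Jfun_pos hd0 hY hK.ne'
  have hanti : StrictAntiOn (scoreBase d0 delta Y N) (Ioc 0 Khigh) :=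
    (scoreBase_strictAntiOn hd0 hdelta hY).mono Ioc_subset_Ioi_self
  have hcont : ContinuousOn (scoreBase d0 delta Y N) (Ioc 0 Khigh) :=
    (scoreBase_continuousOn hd0 hdelta).mono Ioc_subset_Ioi_self
  have hblowup : Tendsto (scoreBase d0 delta Y N) (𝓝[>] 0) atTop :=
    scoreBase_tendsto_nhdsGT_zero hd0 hdelta hY
  rw [score_eq_affineExtension]
  exact existsUnique_gt_eq_of_strictAntiOn_Ioi (affineExtension.strictAntiOn hanti hK hJ)
    (affineExtension.continuousOn hcont hK) (affineExtension.tendsto_nhdsGT hblowup hK)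
    (affineExtension.tendsto_atTop_atBot hJ) 0

theorem stmt15 (dlow dhigh d0 Khigh : ℝ)
    (hd0 : 0 < dlow) (hdd : dlow ≤ dhigh) (hd0' : 0 < d0) (hK : 0 < Khigh)
    (N : ℕ) (hN : 1 ≤ N) (delta Y : ℕ → ℝ)
    (hdval : ∀ n, 1 ≤ n → n ≤ N → delta n ∈ Set.Icc dlow dhigh)
    (hYval : ∀ n, 1 ≤ n → n ≤ N → Y n = 0 ∨ Y n = 1) :
    ∃! kappa : ℝ, 0 < kappa ∧ score d0 Khigh delta Y N kappa = 0 := by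
  refine stmt15_general hd0'.ne' hK (fun n hn => ?_) fun n hn => ?_ <;> rw [Finset.mem_Icc] at hn
  · exact (hd0.trans_le (hdval n hn.1 hn.2).1).ne'
  · rcases hYval n hn.1 hn.2 with h | h <;> simp [h]
end

section
/- Assume K̲ < κ* < K̄, and for each N ≥ 1 let κ_N be the unique element of (0, ∞) with g_N(κ_N) = 0. Then there exist constants N₀, N₀′ ≥ 0 such that for every ε ∈ (0, 1], P( κ_N ∈ [K̲, K̄] for all N ≥ max( N₀ ln(2/ε), N₀′ / ln(2/ε) ) ) ≥ 1 − ε. -/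
/-!
The score decreases in `κ`, so a root `κ_N < K̲` forces `g_N(K̲) ≤ 0` and a root `κ_N > K̄` forces
`g_N(K̄) ≥ 0`. For fixed `K`, the increments of `g_N(K)` are bounded and affine in the response, so
that their conditional mean is `δ (e^{-Kδ} - e^{-κ*δ}) / (1 - e^{-Kδ})`. By compactness of the range
of `δ` this drift is bounded away from zero, with positive sign for `K = K̲` and negative sign for
`K = K̄`. An exponential supermartingale (Azuma-type) bound shows that both events have probability
at most `A e^{-rN}`. The geometric tail from `N ≥ N₀ log (2/ε)` on is at most `ε`: the prefactor is
absorbed by enlarging `N₀`, because `ε / 2 ≤ 1 / 2`. In particular `N₀' = 0` suffices.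
-/

open MeasureTheory

section ExponentiallyRare

open Real

variable {Ω : Type*} {m0 : MeasurableSpace Ω} {P : Measure Ω} {E E' : ℕ → Set Ω}

/-- Events `E N` whose probabilities decay exponentially in `N`; the events need not be measurable,
`P (E N)` is then the outer measure. -/
def ExponentiallyRare (P : Measure Ω) (E : ℕ → Set Ω) : Prop :=
  ∃ A > 0, ∃ r > 0, ∀ N : ℕ, P (E N) ≤ ENNReal.ofReal (A * exp (-(r * N)))

lemma ExponentiallyRare.union (hE : ExponentiallyRare P E) (hE' : ExponentiallyRare P E') :
    ExponentiallyRare P fun N => E N ∪ E' N := by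
  obtain ⟨A, hA, r, hr, hAr⟩ := hE
  obtain ⟨A', hA', r', hr', hAr'⟩ := hE'
  refine ⟨A + A', add_pos hA hA', min r r', lt_min hr hr', fun N => ?_⟩
  calc P (E N ∪ E' N)
      ≤ ENNReal.ofReal (A * exp (-(r * N))) + ENNReal.ofReal (A' * exp (-(r' * N))) :=
        (measure_union_le _ _).trans (add_le_add (hAr N) (hAr' N))
    _ = ENNReal.ofReal (A * exp (-(r * N)) + A' * exp (-(r' * N))) :=
        (ENNReal.ofReal_add (by positivity) (by positivity)).symm
    _ ≤ ENNReal.ofReal ((A + A') * exp (-(min r r' * N))) := by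
        rw [add_mul]
        gcongr
        · exact min_le_left _ _
        · exact min_le_right _ _

lemma measure_exists_ge_le_of_le_exp {A r : ℝ} (hA : 0 ≤ A) (hr : 0 < r)
    (hE : ∀ N : ℕ, P (E N) ≤ ENNReal.ofReal (A * exp (-(r * N)))) (T : ℝ) :
    P {ω | ∃ N : ℕ, T ≤ N ∧ ω ∈ E N}
      ≤ ENNReal.ofReal (A / (1 - exp (-r)) * exp (-(r * T))) := by
  have hq : exp (-r) < 1 := exp_lt_one_iff.2 (neg_lt_zero.2 hr)
  set M := ⌈T⌉₊
  have hgeom : HasSum (fun j : ℕ => A * exp (-(r * M)) * exp (-r) ^ j)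
      (A * exp (-(r * M)) * (1 - exp (-r))⁻¹) :=
    (hasSum_geometric_of_lt_one (exp_pos _).le hq).mul_left _
  have hsub : {ω | ∃ N : ℕ, T ≤ N ∧ ω ∈ E N} ⊆ ⋃ j : ℕ, E (M + j) := by
    rintro ω ⟨N, hTN, hω⟩
    exact Set.mem_iUnion.2 ⟨N - M, by rwa [Nat.add_sub_cancel' (Nat.ceil_le.2 hTN)]⟩
  have hterm (j : ℕ) :
      P (E (M + j)) ≤ ENNReal.ofReal (A * exp (-(r * M)) * exp (-r) ^ j) := by
    refine (hE (M + j)).trans_eq ?_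
    rw [← exp_nat_mul, mul_assoc, ← exp_add]
    push_cast
    ring_nf
  calc P {ω | ∃ N : ℕ, T ≤ N ∧ ω ∈ E N}
      ≤ ∑' j : ℕ, P (E (M + j)) := (measure_mono hsub).trans (measure_iUnion_le _)
    _ ≤ ∑' j : ℕ, ENNReal.ofReal (A * exp (-(r * M)) * exp (-r) ^ j) :=
        ENNReal.tsum_le_tsum hterm
    _ = ENNReal.ofReal (A / (1 - exp (-r)) * exp (-(r * M))) := by
        rw [← ENNReal.ofReal_tsum_of_nonneg (fun j => by positivity) hgeom.summable,
          hgeom.tsum_eq, div_eq_mul_inv, mul_right_comm]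
    _ ≤ ENNReal.ofReal (A / (1 - exp (-r)) * exp (-(r * T))) := by
        have := sub_pos.2 hq
        gcongr
        exact Nat.le_ceil T

lemma exists_mul_exp_neg_log_le (G : ℝ) {r : ℝ} (hr : 0 < r) :
    ∃ N0 : ℝ, 0 ≤ N0 ∧ ∀ ε ∈ Set.Ioc (0 : ℝ) 1, G * exp (-(r * (N0 * log (2 / ε)))) ≤ ε := by
  obtain ⟨p, hp⟩ := pow_unbounded_of_one_lt G one_lt_two
  refine ⟨(p + 1 : ℕ) / r, by positivity, fun ε ⟨hε, hε1⟩ => ?_⟩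
  have hexp : exp (-(r * ((p + 1 : ℕ) / r * log (2 / ε)))) = (ε / 2) ^ (p + 1) := by
    rw [← mul_assoc, mul_div_cancel₀ _ hr.ne', ← mul_neg, ← log_inv, inv_div, exp_nat_mul,
      exp_log (by positivity)]
  calc G * exp (-(r * ((p + 1 : ℕ) / r * log (2 / ε))))
      = G * (ε / 2) ^ (p + 1) := by rw [hexp]
    _ ≤ 2 ^ p * (ε / 2) ^ (p + 1) := by gcongr
    _ = ε ^ p * (ε / 2) := by rw [pow_succ, ← mul_assoc, ← mul_pow, mul_div_cancel₀ _ two_ne_zero]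
    _ ≤ 1 * ε := by
        gcongr
        · exact pow_le_one₀ hε.le hε1
        · linarith
    _ = ε := one_mul ε

lemma ExponentiallyRare.exists_log_threshold (hE : ExponentiallyRare P E) :
    ∃ N0 : ℝ, 0 ≤ N0 ∧ ∀ ε ∈ Set.Ioc (0 : ℝ) 1,
      P {ω | ∃ N : ℕ, N0 * log (2 / ε) ≤ N ∧ ω ∈ E N} ≤ ENNReal.ofReal ε := by
  obtain ⟨A, hA, r, hr, hAr⟩ := hE
  obtain ⟨N0, hN0, hthreshold⟩ := exists_mul_exp_neg_log_le (A / (1 - exp (-r))) hr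
  exact ⟨N0, hN0, fun ε hε => (measure_exists_ge_le_of_le_exp hA.le hr hAr _).trans
    (ENNReal.ofReal_le_ofReal (hthreshold ε hε))⟩

lemma ofReal_one_sub_le_measure_of_compl_le [IsProbabilityMeasure P] {s : Set Ω} {ε : ℝ}
    (hε : 0 ≤ ε) (hs : P sᶜ ≤ ENNReal.ofReal ε) : ENNReal.ofReal (1 - ε) ≤ P s := by
  rw [ENNReal.ofReal_sub _ hε, ENNReal.ofReal_one, tsub_le_iff_right]
  calc (1 : ENNReal) = P (s ∪ sᶜ) := by rw [Set.union_compl_self, measure_univ]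
    _ ≤ P s + P sᶜ := measure_union_le _ _
    _ ≤ P s + ENNReal.ofReal ε := by gcongr

end ExponentiallyRare

section Concentration

open Real ProbabilityTheory Topology

variable {Ω : Type*} {m m0 : MeasurableSpace Ω} {P : Measure Ω} {B c l : ℝ}

lemma exp_neg_le_one_sub_add_sq {x : ℝ} (hx : |x| ≤ 1) : exp (-x) ≤ 1 - x + x ^ 2 := by
  have := (abs_le.1 (abs_exp_sub_one_sub_id_le (x := -x) (by rwa [abs_neg]))).2
  linarith [neg_sq x]

lemma condExp_exp_neg_mul_le [IsFiniteMeasure P] (hm : m ≤ m0) {X : Ω → ℝ}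
    (hX : AEStronglyMeasurable X P) (hbound : ∀ᵐ ω ∂P, |X ω| ≤ B)
    (hdrift : ∀ᵐ ω ∂P, c ≤ P[X | m] ω) (hl : 0 ≤ l) (hlB : l * B ≤ 1) :
    ∀ᵐ ω ∂P, P[fun ω => exp (-l * X ω) | m] ω ≤ exp (l ^ 2 * B ^ 2 - l * c) := by
  have hXint : Integrable X P := .of_bound hX B hbound
  have hexpint : Integrable (fun ω => exp (-l * X ω)) P :=
    integrable_exp_mul_of_mem_Icc hX.aemeasurable (hbound.mono fun ω hω => abs_le.1 hω)
  have hle : (fun ω => exp (-l * X ω)) ≤ᵐ[P] (fun _ => 1 + l ^ 2 * B ^ 2) - l • X := by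
    filter_upwards [hbound] with ω hω
    have hlX : |l * X ω| ≤ l * B := by
      rw [abs_mul, abs_of_nonneg hl]
      gcongr
    calc exp (-l * X ω) ≤ 1 - l * X ω + (l * X ω) ^ 2 := by
          rw [neg_mul]
          exact exp_neg_le_one_sub_add_sq (hlX.trans hlB)
      _ ≤ 1 - l * X ω + (l * B) ^ 2 := by
          linarith [sq_le_sq' (abs_le.1 hlX).1 (abs_le.1 hlX).2]
      _ = 1 + l ^ 2 * B ^ 2 - l * X ω := by ring
  filter_upwards [condExp_mono (m := m) hexpint ((integrable_const _).sub (hXint.smul l)) hle,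
    condExp_sub (integrable_const (1 + l ^ 2 * B ^ 2)) (hXint.smul l) m,
    condExp_smul (μ := P) l X m, hdrift] with ω hmono hsub hsmul hc
  rw [hsub, Pi.sub_apply, hsmul, condExp_const hm, Pi.smul_apply, smul_eq_mul] at hmono
  calc P[fun ω => exp (-l * X ω) | m] ω ≤ 1 + l ^ 2 * B ^ 2 - l * P[X | m] ω := hmono
    _ ≤ 1 + l ^ 2 * B ^ 2 - l * c := by gcongr
    _ ≤ exp (l ^ 2 * B ^ 2 - l * c) := by linarith [add_one_le_exp (l ^ 2 * B ^ 2 - l * c)]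

lemma integral_mul_le_of_condExp_le [IsFiniteMeasure P] (hm : m ≤ m0) {W V : Ω → ℝ} {C : ℝ}
    (hW : StronglyMeasurable[m] W) (hW0 : 0 ≤ W) (hWint : Integrable W P)
    (hV : Integrable V P) (hWV : Integrable (W * V) P) (hC : ∀ᵐ ω ∂P, P[V | m] ω ≤ C) :
    ∫ ω, W ω * V ω ∂P ≤ C * ∫ ω, W ω ∂P := by
  calc ∫ ω, (W * V) ω ∂P = ∫ ω, P[W * V | m] ω ∂P := (integral_condExp hm).symm
    _ ≤ ∫ ω, C * W ω ∂P := by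
        refine integral_mono_ae integrable_condExp (hWint.const_mul C) ?_
        filter_upwards [condExp_mul_of_stronglyMeasurable_left hW hWV hV, hC] with ω hpull hω
        rw [hpull, Pi.mul_apply, mul_comm]
        exact mul_le_mul_of_nonneg_right hω (hW0 ω)
    _ = C * ∫ ω, W ω ∂P := integral_const_mul _ _

lemma condExp_add_mul_of_stronglyMeasurable [IsFiniteMeasure P] (hm : m ≤ m0) {U V Z : Ω → ℝ}
    (hU : StronglyMeasurable[m] U) (hV : StronglyMeasurable[m] V) (hUint : Integrable U P)
    (hVZ : Integrable (V * Z) P) (hZ : Integrable Z P) :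
    P[U + V * Z | m] =ᵐ[P] U + V * P[Z | m] := by
  filter_upwards [condExp_add hUint hVZ m,
    condExp_mul_of_stronglyMeasurable_left hV hVZ hZ] with ω hadd hpull
  rw [hadd, Pi.add_apply, hpull, condExp_of_stronglyMeasurable hm hU hUint, Pi.add_apply]

variable {F : Filtration ℕ m0} {X : ℕ → Ω → ℝ}

lemma measurable_sum_range_of_adapted (hX : ∀ n, Measurable[F (n + 1)] (X n)) (N : ℕ) :
    Measurable[F N] fun ω => ∑ i ∈ Finset.range N, X i ω :=
  Finset.measurable_sum _ fun i hi =>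
    (hX i).mono (F.mono (Finset.mem_range.1 hi)) le_rfl

lemma integrable_exp_mul_sum_range [IsFiniteMeasure P] (hX : ∀ n, Measurable (X n))
    (hbound : ∀ n, ∀ᵐ ω ∂P, |X n ω| ≤ B) (t : ℝ) (N : ℕ) :
    Integrable (fun ω => exp (t * ∑ i ∈ Finset.range N, X i ω)) P := by
  refine integrable_exp_mul_of_mem_Icc (a := -(N * B)) (b := N * B)
    (Finset.measurable_sum _ fun i _ => hX i).aemeasurable ?_
  filter_upwards [ae_all_iff.2 hbound] with ω hω
  rw [Set.mem_Icc, ← abs_le]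
  calc |∑ i ∈ Finset.range N, X i ω| ≤ ∑ i ∈ Finset.range N, |X i ω| :=
        Finset.abs_sum_le_sum_abs _ _
    _ ≤ ∑ _i ∈ Finset.range N, B := Finset.sum_le_sum fun i _ => hω i
    _ = N * B := by simp

lemma mgf_sum_range_le [IsProbabilityMeasure P] (hX : ∀ n, Measurable[F (n + 1)] (X n))
    (hbound : ∀ n, ∀ᵐ ω ∂P, |X n ω| ≤ B) (hdrift : ∀ n, ∀ᵐ ω ∂P, c ≤ P[X n | F n] ω)
    (hl : 0 ≤ l) (hlB : l * B ≤ 1) (N : ℕ) :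
    mgf (fun ω => ∑ i ∈ Finset.range N, X i ω) P (-l)
      ≤ exp (N * (l ^ 2 * B ^ 2 - l * c)) := by
  have hXm (n : ℕ) : Measurable (X n) := (hX n).mono (F.le _) le_rfl
  have hint := integrable_exp_mul_sum_range hXm hbound (-l)
  induction N with
  | zero => simp [mgf]
  | succ N ih =>
    have hsplit (ω : Ω) : exp (-l * ∑ i ∈ Finset.range (N + 1), X i ω)
        = exp (-l * ∑ i ∈ Finset.range N, X i ω) * exp (-l * X N ω) := by
      rw [Finset.sum_range_succ, mul_add, exp_add]
    have hstep : ∫ ω, exp (-l * ∑ i ∈ Finset.range N, X i ω) * exp (-l * X N ω) ∂P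
        ≤ exp (l ^ 2 * B ^ 2 - l * c) * ∫ ω, exp (-l * ∑ i ∈ Finset.range N, X i ω) ∂P :=
      integral_mul_le_of_condExp_le (F.le N)
        ((measurable_sum_range_of_adapted hX N).const_mul (-l)).exp.stronglyMeasurable
        (fun ω => (exp_pos _).le) (hint N)
        (integrable_exp_mul_of_mem_Icc (hXm N).aemeasurable
          ((hbound N).mono fun ω hω => abs_le.1 hω))
        ((hint (N + 1)).congr (.of_forall hsplit))
        (condExp_exp_neg_mul_le (F.le N) (hXm N).aestronglyMeasurable (hbound N) (hdrift N)
          hl hlB)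
    calc mgf (fun ω => ∑ i ∈ Finset.range (N + 1), X i ω) P (-l)
        ≤ exp (l ^ 2 * B ^ 2 - l * c) * exp (N * (l ^ 2 * B ^ 2 - l * c)) := by
          simp only [mgf, hsplit]
          exact hstep.trans (mul_le_mul_of_nonneg_left ih (exp_pos _).le)
      _ = exp ((N + 1 : ℕ) * (l ^ 2 * B ^ 2 - l * c)) := by
          rw [← exp_add]
          push_cast
          ring_nf

lemma exists_pos_mul_le_one_and_mul_sq_lt (B : ℝ) (hc : 0 < c) :
    ∃ l > 0, l * B ≤ 1 ∧ l * B ^ 2 < c := by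
  have hsmall (b : ℝ) {a : ℝ} (ha : 0 < a) : ∀ᶠ l in 𝓝[>] (0 : ℝ), l * b < a :=
    nhdsWithin_le_nhds (((continuous_mul_const b).tendsto' 0 0 (zero_mul b)).eventually_lt_const ha)
  obtain ⟨l, ⟨hlB, hlc⟩, hl⟩ :=
    (((hsmall B one_pos).and (hsmall (B ^ 2) hc)).and eventually_mem_nhdsWithin).exists
  exact ⟨l, hl, hlB.le, hlc⟩

lemma exponentiallyRare_sum_le [IsProbabilityMeasure P] (hX : ∀ n, Measurable[F (n + 1)] (X n))
    (hbound : ∀ n, ∀ᵐ ω ∂P, |X n ω| ≤ B) (hc : 0 < c)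
    (hdrift : ∀ n, ∀ᵐ ω ∂P, c ≤ P[X n | F n] ω) (C : ℝ) :
    ExponentiallyRare P fun N => {ω | ∑ i ∈ Finset.range N, X i ω ≤ C} := by
  obtain ⟨l, hl, hlB, hlc⟩ := exists_pos_mul_le_one_and_mul_sq_lt B hc
  refine ⟨exp (l * C), exp_pos _, l * (c - l * B ^ 2), mul_pos hl (sub_pos.2 hlc), fun N => ?_⟩
  have hint := integrable_exp_mul_sum_range (fun n => (hX n).mono (F.le _) le_rfl) hbound (-l) N
  rw [← ofReal_measureReal]
  refine ENNReal.ofReal_le_ofReal ?_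
  calc P.real {ω | ∑ i ∈ Finset.range N, X i ω ≤ C}
      ≤ exp (-(-l) * C) * mgf (fun ω => ∑ i ∈ Finset.range N, X i ω) P (-l) :=
        measure_le_le_exp_mul_mgf C (neg_nonpos.2 hl.le) hint
    _ ≤ exp (-(-l) * C) * exp (N * (l ^ 2 * B ^ 2 - l * c)) := by
        gcongr
        exact mgf_sum_range_le hX hbound hdrift hl.le hlB N
    _ = exp (l * C) * exp (-(l * (c - l * B ^ 2) * N)) := by ring_nf

lemma exponentiallyRare_le_sum [IsProbabilityMeasure P] (hX : ∀ n, Measurable[F (n + 1)] (X n))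
    (hbound : ∀ n, ∀ᵐ ω ∂P, |X n ω| ≤ B) (hc : c < 0)
    (hdrift : ∀ n, ∀ᵐ ω ∂P, P[X n | F n] ω ≤ c) (C : ℝ) :
    ExponentiallyRare P fun N => {ω | C ≤ ∑ i ∈ Finset.range N, X i ω} := by
  have hdrift_neg (n : ℕ) : ∀ᵐ ω ∂P, -c ≤ P[-X n | F n] ω := by
    filter_upwards [condExp_neg (μ := P) (X n) (F n), hdrift n] with ω hneg hω
    rw [hneg, Pi.neg_apply]
    exact neg_le_neg hω
  simpa only [Pi.neg_apply, Finset.sum_neg_distrib, neg_le_neg_iff] using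
    exponentiallyRare_sum_le (X := fun n => -X n) (B := B) (fun n => (hX n).neg)
      (fun n => by simpa only [Pi.neg_apply, abs_neg] using hbound n)
      (neg_pos.2 hc) hdrift_neg (-C)

end Concentration

section ScoreTerm

open Real

variable {K k d y : ℝ}

/-- The contribution to the score at `K` of a response `y` at distance `d`, i.e. the
`K`-derivative of the Bernoulli log-likelihood `y log p + (1 - y) log (1 - p)` at `p = e^{-Kd}`. -/
noncomputable def scoreTerm (K d y : ℝ) : ℝ :=
  -(d * y) + (1 - y) * d * (exp (-(K * d)) / (1 - exp (-(K * d))))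

lemma scoreTerm_eq_affine (K d y : ℝ) :
    scoreTerm K d y = scoreTerm K d 0 + (scoreTerm K d 1 - scoreTerm K d 0) * y := by
  simp only [scoreTerm]
  ring

lemma one_sub_exp_neg_mul_pos (hK : 0 < K) (hd : 0 < d) : 0 < 1 - exp (-(K * d)) :=
  sub_pos.2 (exp_lt_one_iff.2 (neg_lt_zero.2 (mul_pos hK hd)))

lemma scoreTerm_eq_div (hK : 0 < K) (hd : 0 < d) :
    scoreTerm K d y = d * (exp (-(K * d)) - y) / (1 - exp (-(K * d))) := by
  have := (one_sub_exp_neg_mul_pos hK hd).ne'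
  rw [scoreTerm, eq_div_iff this, add_mul, mul_assoc _ (_ / _), div_mul_cancel₀ _ this]
  ring

lemma scoreTerm_exp_pos (hK : 0 < K) (hd : 0 < d) (hKk : K < k) :
    0 < scoreTerm K d (exp (-(k * d))) := by
  rw [scoreTerm_eq_div hK hd]
  refine div_pos (mul_pos hd (sub_pos.2 (exp_lt_exp.2 ?_))) (one_sub_exp_neg_mul_pos hK hd)
  gcongr

lemma scoreTerm_exp_neg (hK : 0 < K) (hd : 0 < d) (hkK : k < K) :
    scoreTerm K d (exp (-(k * d))) < 0 := by
  rw [scoreTerm_eq_div hK hd]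
  refine div_neg_of_neg_of_pos (mul_neg_of_pos_of_neg hd (sub_neg.2 (exp_lt_exp.2 ?_)))
    (one_sub_exp_neg_mul_pos hK hd)
  gcongr

lemma antitoneOn_scoreTerm (hd : 0 < d) (hy : y ≤ 1) :
    AntitoneOn (fun K => scoreTerm K d y) (Set.Ioi 0) := by
  intro K hK K' _ hKK'
  have hexp : exp (-(K' * d)) ≤ exp (-(K * d)) := by gcongr
  have hodds : exp (-(K' * d)) / (1 - exp (-(K' * d))) ≤ exp (-(K * d)) / (1 - exp (-(K * d))) :=
    div_le_div₀ (exp_pos _).le hexp (one_sub_exp_neg_mul_pos hK hd) (by linarith)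
  have := mul_le_mul_of_nonneg_left hodds (mul_nonneg (sub_nonneg.2 hy) hd.le)
  simpa only [scoreTerm] using add_le_add_right this _

lemma continuousOn_scoreTerm (hK : 0 < K) :
    ContinuousOn (fun p : ℝ × ℝ => scoreTerm K p.1 p.2) (Set.Ioi 0 ×ˢ Set.univ) := by
  unfold scoreTerm
  refine ContinuousOn.add (by fun_prop) (ContinuousOn.mul (by fun_prop)
    (ContinuousOn.div (by fun_prop) (by fun_prop) fun p hp => ?_))
  exact (one_sub_exp_neg_mul_pos hK hp.1).ne'

lemma measurable_scoreTerm (K : ℝ) : Measurable fun p : ℝ × ℝ => scoreTerm K p.1 p.2 := by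
  unfold scoreTerm
  fun_prop

lemma exists_abs_scoreTerm_le (hK : 0 < K) {a : ℝ} (ha : 0 < a) (b : ℝ) :
    ∃ B, ∀ d ∈ Set.Icc a b, ∀ y ∈ Set.Icc (0 : ℝ) 1, |scoreTerm K d y| ≤ B := by
  obtain ⟨B, hB⟩ := (isCompact_Icc.prod isCompact_Icc).exists_bound_of_continuousOn
    ((continuousOn_scoreTerm hK).mono
      (Set.prod_mono (fun d (hd : d ∈ Set.Icc a b) => ha.trans_le hd.1)
        (Set.subset_univ (Set.Icc (0 : ℝ) 1))))
  exact ⟨B, fun d hd y hy => hB (d, y) ⟨hd, hy⟩⟩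

lemma continuousOn_scoreTerm_exp (hK : 0 < K) (k : ℝ) :
    ContinuousOn (fun d => scoreTerm K d (exp (-(k * d)))) (Set.Ioi 0) :=
  (continuousOn_scoreTerm hK).comp (f := fun d => (d, exp (-(k * d)))) (by fun_prop)
    fun _ hd => ⟨hd, Set.mem_univ _⟩

lemma exists_pos_le_scoreTerm_exp (hK : 0 < K) (hKk : K < k) {a : ℝ} (ha : 0 < a) (b : ℝ) :
    ∃ c > 0, ∀ d ∈ Set.Icc a b, c ≤ scoreTerm K d (exp (-(k * d))) :=
  isCompact_Icc.exists_forall_le'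
    ((continuousOn_scoreTerm_exp hK k).mono fun _ hd => ha.trans_le hd.1)
    fun _ hd => scoreTerm_exp_pos hK (ha.trans_le hd.1) hKk

lemma exists_neg_scoreTerm_exp_le (hK : 0 < K) (hkK : k < K) {a : ℝ} (ha : 0 < a) (b : ℝ) :
    ∃ c < 0, ∀ d ∈ Set.Icc a b, scoreTerm K d (exp (-(k * d))) ≤ c := by
  obtain ⟨c, hc, hle⟩ := isCompact_Icc.exists_forall_le'
    ((continuousOn_scoreTerm_exp hK k).neg.mono fun _ (hd : _ ∈ Set.Icc a b) => ha.trans_le hd.1)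
    fun _ hd => neg_pos.2 (scoreTerm_exp_neg hK (ha.trans_le hd.1) hkK)
  exact ⟨-c, neg_neg_of_pos hc, fun d hd => le_neg_of_le_neg (hle d hd)⟩

end ScoreTerm

section Score

variable {d0 K Klow Khigh kappa : ℝ} {delta Y : ℕ → ℝ} {N : ℕ}

lemma sum_Icc_one_eq_sum_range {M : Type*} [AddCommMonoid M] (f : ℕ → M) (N : ℕ) :
    ∑ n ∈ Finset.Icc 1 N, f n = ∑ i ∈ Finset.range N, f (i + 1) := by
  rw [Finset.range_eq_Ico, Finset.sum_Ico_add' f 0 N 1]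
  rfl

/-- The regularisation amounts to two extra observations at distance `d0`, one of each kind. -/
lemma scoreBase_eq_sum_scoreTerm (d0 : ℝ) (delta Y : ℕ → ℝ) (N : ℕ) (K : ℝ) :
    scoreBase d0 delta Y N K
      = ∑ i ∈ Finset.range N, scoreTerm K (delta (i + 1)) (Y (i + 1))
        + (scoreTerm K d0 1 + scoreTerm K d0 0) := by
  rw [← sum_Icc_one_eq_sum_range fun n => scoreTerm K (delta n) (Y n)]
  simp only [scoreBase, scoreTerm]
  ring

lemma antitoneOn_scoreBase (hd0 : 0 < d0) (hdelta : ∀ n, 0 < delta (n + 1))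
    (hY : ∀ n, Y (n + 1) ≤ 1) : AntitoneOn (scoreBase d0 delta Y N) (Set.Ioi 0) := by
  intro K hK K' hK' hKK'
  simp only [scoreBase_eq_sum_scoreTerm]
  gcongr ?_ + (?_ + ?_)
  · exact Finset.sum_le_sum fun i _ => antitoneOn_scoreTerm (hdelta i) (hY i) hK hK' hKK'
  · exact antitoneOn_scoreTerm hd0 le_rfl hK hK' hKK'
  · exact antitoneOn_scoreTerm hd0 zero_le_one hK hK' hKK'

lemma Jfun_nonneg (hY : ∀ n, Y (n + 1) ≤ 1) : 0 ≤ Jfun d0 delta Y N K := by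
  rw [Jfun, sum_Icc_one_eq_sum_range]
  refine add_nonneg (Finset.sum_nonneg fun i _ => ?_) (by positivity)
  exact mul_nonneg (mul_nonneg (sub_nonneg.2 (hY i)) (sq_nonneg _)) (by positivity)

lemma mem_Icc_of_score_eq_zero (hd0 : 0 < d0) (hdelta : ∀ n, 0 < delta (n + 1))
    (hY : ∀ n, Y (n + 1) ≤ 1) (hKlow : 0 < Klow) (hK : Klow ≤ Khigh) (hkappa : 0 < kappa)
    (hroot : score d0 Khigh delta Y N kappa = 0) (hlow : 0 < scoreBase d0 delta Y N Klow)
    (hhigh : scoreBase d0 delta Y N Khigh < 0) : kappa ∈ Set.Icc Klow Khigh := by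
  by_contra! hout
  rcases lt_or_ge kappa Klow with hlt | hge
  · rw [score, if_pos (hlt.le.trans hK)] at hroot
    linarith [antitoneOn_scoreBase (N := N) hd0 hdelta hY hkappa hKlow hlt.le]
  · have hgt : Khigh < kappa := not_le.1 fun hle => hout ⟨hge, hle⟩
    rw [score, if_neg hgt.not_ge] at hroot
    linarith [mul_nonneg (sub_pos.2 hgt).le (Jfun_nonneg (d0 := d0) (delta := delta) (N := N)
      (K := Khigh) hY)]

end Score

section ResponseProcess

open Real

variable {Ω : Type*} {m0 : MeasurableSpace Ω} {P : Measure Ω} {F : Filtration ℕ m0}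
  {k a b K : ℝ} {delta Y : ℕ → Ω → ℝ}

/-- Predictable distances `delta n ∈ [a, b]` and adapted responses `Y n` with conditional mean
`e^{-k delta n}`, at times `n ≥ 1`. The responses may be fractional: any value in `[0, 1]` is
allowed. -/
structure IsResponseProcess (P : Measure Ω) (F : Filtration ℕ m0) (k a b : ℝ)
    (delta Y : ℕ → Ω → ℝ) : Prop where
  measurable_delta (n : ℕ) : Measurable[F n] (delta (n + 1))
  delta_mem (n : ℕ) (ω : Ω) : delta (n + 1) ω ∈ Set.Icc a b
  measurable_response (n : ℕ) : Measurable[F (n + 1)] (Y (n + 1))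
  response_mem (n : ℕ) (ω : Ω) : Y (n + 1) ω ∈ Set.Icc (0 : ℝ) 1
  condExp_response (n : ℕ) :
    P[Y (n + 1) | F n] =ᵐ[P] fun ω => exp (-(k * delta (n + 1) ω))

namespace IsResponseProcess

lemma adapted_scoreTerm (h : IsResponseProcess P F k a b delta Y) (K : ℝ) (n : ℕ) :
    Measurable[F (n + 1)] fun ω => scoreTerm K (delta (n + 1) ω) (Y (n + 1) ω) :=
  (measurable_scoreTerm K).comp
    (((h.measurable_delta n).mono (F.mono n.le_succ) le_rfl).prodMk (h.measurable_response n))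

lemma condExp_scoreTerm [IsFiniteMeasure P] (h : IsResponseProcess P F k a b delta Y)
    (ha : 0 < a) (hK : 0 < K) (n : ℕ) :
    P[fun ω => scoreTerm K (delta (n + 1) ω) (Y (n + 1) ω) | F n]
      =ᵐ[P] fun ω => scoreTerm K (delta (n + 1) ω) (exp (-(k * delta (n + 1) ω))) := by
  obtain ⟨B, hB⟩ := exists_abs_scoreTerm_le hK ha b
  have hmeas (y : ℝ) : Measurable[F n] fun ω => scoreTerm K (delta (n + 1) ω) y :=
    (measurable_scoreTerm K).comp ((h.measurable_delta n).prodMk measurable_const)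
  have hint {y : ℝ} (hy : y ∈ Set.Icc (0 : ℝ) 1) :
      Integrable (fun ω => scoreTerm K (delta (n + 1) ω) y) P :=
    .of_bound ((hmeas y).mono (F.le n) le_rfl).aestronglyMeasurable B
      (.of_forall fun ω => hB _ (h.delta_mem n ω) y hy)
  have hYmeas := ((h.measurable_response n).mono (F.le _) le_rfl).aestronglyMeasurable (μ := P)
  have hYbound : ∀ᵐ ω ∂P, ‖Y (n + 1) ω‖ ≤ 1 := .of_forall fun ω => by
    rw [norm_of_nonneg (h.response_mem n ω).1]
    exact (h.response_mem n ω).2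
  have hcondExp := condExp_add_mul_of_stronglyMeasurable (F.le n) (hmeas 0).stronglyMeasurable
    ((hmeas 1).sub (hmeas 0)).stronglyMeasurable (hint (by simp))
    (((hint (by simp)).sub (hint (by simp))).mul_bdd hYmeas hYbound) (.of_bound hYmeas 1 hYbound)
  simp only [fun ω => scoreTerm_eq_affine K (delta (n + 1) ω) (Y (n + 1) ω)]
  filter_upwards [hcondExp, h.condExp_response n] with ω hω hresponse
  rw [scoreTerm_eq_affine, ← hresponse]
  exact hω

lemma exponentiallyRare_scoreBase_nonpos [IsProbabilityMeasure P]
    (h : IsResponseProcess P F k a b delta Y) (ha : 0 < a) (hK : 0 < K) (hKk : K < k) (d0 : ℝ) :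
    ExponentiallyRare P fun N => {ω | scoreBase d0 (delta · ω) (Y · ω) N K ≤ 0} := by
  obtain ⟨B, hB⟩ := exists_abs_scoreTerm_le hK ha b
  obtain ⟨c, hc, hdrift⟩ := exists_pos_le_scoreTerm_exp hK hKk ha b
  simp only [scoreBase_eq_sum_scoreTerm, ← le_neg_iff_add_nonpos_right]
  refine exponentiallyRare_sum_le (h.adapted_scoreTerm K)
    (fun n => .of_forall fun ω => hB _ (h.delta_mem n ω) _ (h.response_mem n ω)) hc
    (fun n => ?_) _
  filter_upwards [h.condExp_scoreTerm ha hK n] with ω hω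
  exact (hdrift _ (h.delta_mem n ω)).trans_eq hω.symm

lemma exponentiallyRare_scoreBase_nonneg [IsProbabilityMeasure P]
    (h : IsResponseProcess P F k a b delta Y) (ha : 0 < a) (hK : 0 < K) (hkK : k < K) (d0 : ℝ) :
    ExponentiallyRare P fun N => {ω | 0 ≤ scoreBase d0 (delta · ω) (Y · ω) N K} := by
  obtain ⟨B, hB⟩ := exists_abs_scoreTerm_le hK ha b
  obtain ⟨c, hc, hdrift⟩ := exists_neg_scoreTerm_exp_le hK hkK ha b
  simp only [scoreBase_eq_sum_scoreTerm, ← neg_le_iff_add_nonneg]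
  refine exponentiallyRare_le_sum (h.adapted_scoreTerm K)
    (fun n => .of_forall fun ω => hB _ (h.delta_mem n ω) _ (h.response_mem n ω)) hc
    (fun n => ?_) _
  filter_upwards [h.condExp_scoreTerm ha hK n] with ω hω
  exact hω.trans_le (hdrift _ (h.delta_mem n ω))

end IsResponseProcess

theorem stmt19_general [IsProbabilityMeasure P] {d0 Klow Khigh : ℝ} (ha : 0 < a) (hd0 : 0 < d0)
    (hKlow : 0 < Klow) (hlow : Klow < k) (hhigh : k < Khigh)
    (h : IsResponseProcess P F k a b delta Y) (kappaN : ℕ → Ω → ℝ)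
    (hpos : ∀ N, 1 ≤ N → ∀ ω, 0 < kappaN N ω)
    (hroot : ∀ N, 1 ≤ N → ∀ ω,
      score d0 Khigh (fun n => delta n ω) (fun n => Y n ω) N (kappaN N ω) = 0) :
    ∃ N0 : ℝ, 0 ≤ N0 ∧ ∀ ε ∈ Set.Ioc (0 : ℝ) 1,
      ENNReal.ofReal (1 - ε) ≤
        P {ω | ∀ N : ℕ, 1 ≤ N → N0 * log (2 / ε) ≤ N → kappaN N ω ∈ Set.Icc Klow Khigh} := by
  have hK : Klow < Khigh := hlow.trans hhigh
  obtain ⟨N0, hN0, hrare⟩ := ((h.exponentiallyRare_scoreBase_nonpos ha hKlow hlow d0).union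
    (h.exponentiallyRare_scoreBase_nonneg ha (hKlow.trans hK) hhigh d0)).exists_log_threshold
  refine ⟨N0, hN0, fun ε hε => ofReal_one_sub_le_measure_of_compl_le hε.1.le
    ((measure_mono fun ω hω => ?_).trans (hrare ε hε))⟩
  by_contra hgood
  refine hω fun N hN hthreshold => ?_
  have hscore : ¬(scoreBase d0 (delta · ω) (Y · ω) N Klow ≤ 0 ∨
      0 ≤ scoreBase d0 (delta · ω) (Y · ω) N Khigh) := fun hbad => hgood ⟨N, hthreshold, hbad⟩
  rw [not_or, not_le, not_le] at hscore
  exact mem_Icc_of_score_eq_zero hd0 (fun n => ha.trans_le (h.delta_mem n ω).1)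
    (fun n => (h.response_mem n ω).2) hKlow hK.le (hpos N hN ω) (hroot N hN ω) hscore.1 hscore.2

end ResponseProcess

theorem stmt19 {Ω : Type*} [m0 : MeasurableSpace Ω] (P : Measure Ω)
    [IsProbabilityMeasure P] (F : Filtration ℕ m0)
    (kstar dlow dhigh d0 Klow Khigh : ℝ)
    (hk : 0 < kstar) (hd0 : 0 < dlow) (hdd : dlow ≤ dhigh) (hd0' : 0 < d0)
    (hK : 0 < Klow) (hKK : Klow < Khigh)
    (hkl : Klow < kstar) (hkh : kstar < Khigh)
    (delta : ℕ → Ω → ℝ) (Y : ℕ → Ω → ℝ)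
    (hdmeas : ∀ n, 1 ≤ n → Measurable[F (n - 1)] (delta n))
    (hdval : ∀ n, 1 ≤ n → ∀ ω, delta n ω ∈ Set.Icc dlow dhigh)
    (hYmeas : ∀ n, 1 ≤ n → Measurable[F n] (Y n))
    (hYval : ∀ n ω, Y n ω = 0 ∨ Y n ω = 1)
    (hcond : ∀ n, 1 ≤ n →
      P[Y n|F (n - 1)] =ᵐ[P] fun ω => Real.exp (-(kstar * delta n ω)))
    -- κ_N is the unique positive root of the regularised score g_N
    (kappaN : ℕ → Ω → ℝ)
    (hpos : ∀ N, 1 ≤ N → ∀ ω, 0 < kappaN N ω)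
    (hroot : ∀ N, 1 ≤ N → ∀ ω,
      score d0 Khigh (fun n => delta n ω) (fun n => Y n ω) N (kappaN N ω) = 0)
    (huniq : ∀ N, 1 ≤ N → ∀ ω, ∀ kappa : ℝ, 0 < kappa →
      score d0 Khigh (fun n => delta n ω) (fun n => Y n ω) N kappa = 0 →
      kappa = kappaN N ω) :
    ∃ N0 : ℝ, 0 ≤ N0 ∧ ∃ N0' : ℝ, 0 ≤ N0' ∧
      ∀ ε : ℝ, ε ∈ Set.Ioc (0 : ℝ) 1 →
        ENNReal.ofReal (1 - ε) ≤
          P {ω | ∀ N : ℕ, 1 ≤ N →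
                max (N0 * Real.log (2 / ε)) (N0' / Real.log (2 / ε)) ≤ (N : ℝ) →
                kappaN N ω ∈ Set.Icc Klow Khigh} := by
  have hprocess : IsResponseProcess P F kstar dlow dhigh delta Y :=
    { measurable_delta := fun n => hdmeas (n + 1) n.succ_pos
      delta_mem := fun n => hdval (n + 1) n.succ_pos
      measurable_response := fun n => hYmeas (n + 1) n.succ_pos
      response_mem := fun n ω => by rcases hYval (n + 1) ω with h | h <;> simp [h]
      condExp_response := fun n => hcond (n + 1) n.succ_pos }
  obtain ⟨N0, hN0, hmain⟩ := stmt19_general hd0 hd0' hK hkl hkh hprocess kappaN hpos hroot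
  exact ⟨N0, hN0, 0, le_rfl, fun ε hε => (hmain ε hε).trans (measure_mono fun ω hω N hN hmax =>
    hω N hN ((le_max_left _ _).trans hmax))⟩
end
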